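/- arXiv:1212.0719 — 6 statements merged into one kernel-verified Lean document; each statement's English description precedes it below -/
import Mathlib

section
/- Let R > 0 and let h : [0,R) → ℝ be twice continuously differentiable satisfying (A1) h(0) > 0, h''(0) > 0, h'(0) = −1, (A2) h'' is convex and strictly increasing on [0,R), and (A3) h has a zero in (0,R) with smallest zero t* and h'(t*) < 0. Then h is strictly convex on [0,R), h(t) > 0 for all t ∈ [0,t*), and the equation h(t) = 0 has at most one root on (t*,R). -/
/-!
The derivative `h''` is positive because it increases from `h''(0) > 0`, so `h'` is strictly
increasing and `h` is strictly convex. Before its first zero `h` keeps the sign of `h(0)`. A further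
zero `t > t*` is unique because, of three points where a function takes the same value, the middle
one contradicts strict convexity.
-/

open Set

theorem strictMonoOn_of_forall_hasDerivWithinAt_of_pos {D : Set ℝ} (hD : Convex ℝ D) {f f' : ℝ → ℝ}
    (hf : ∀ x ∈ D, HasDerivWithinAt f (f' x) D x) (hf' : ∀ x ∈ interior D, 0 < f' x) :
    StrictMonoOn f D :=
  strictMonoOn_of_hasDerivWithinAt_pos hD (HasDerivWithinAt.continuousOn hf)
    (fun x hx ↦ (hf x (interior_subset hx)).mono interior_subset) hf'

theorem strictConvexOn_of_forall_hasDerivWithinAt_of_strictMonoOn {D : Set ℝ} (hD : Convex ℝ D)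
    {f f' : ℝ → ℝ} (hf : ∀ x ∈ D, HasDerivWithinAt f (f' x) D x)
    (hf' : StrictMonoOn f' (interior D)) : StrictConvexOn ℝ D f := by
  have hderiv : EqOn f' (deriv f) (interior D) := fun x hx ↦
    ((hf x (interior_subset hx)).hasDerivAt (mem_interior_iff_mem_nhds.1 hx)).deriv.symm
  exact (hf'.congr hderiv).strictConvexOn_of_deriv hD (HasDerivWithinAt.continuousOn hf)

theorem forall_lt_of_isPreconnected_of_forall_ne {X α : Type*} [TopologicalSpace X] [LinearOrder α]
    [TopologicalSpace α] [OrderClosedTopology α] {s : Set X} (hs : IsPreconnected s) {f : X → α}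
    (hf : ContinuousOn f s) {c : α} (hne : ∀ x ∈ s, f x ≠ c) {a : X} (ha : a ∈ s) (hca : c < f a) :
    ∀ x ∈ s, c < f x := by
  intro x hx
  by_contra! hxc
  obtain ⟨z, hz, hzc⟩ := hs.intermediate_value hx ha hf ⟨hxc, hca.le⟩
  exact hne z hz hzc

theorem subsingleton_setOf_gt_and_eq_of_strictConvexOn {𝕜 β : Type*} [Field 𝕜] [LinearOrder 𝕜]
    [IsStrictOrderedRing 𝕜] [AddCommMonoid β] [PartialOrder β] [Module 𝕜 β] {s : Set 𝕜}
    {f : 𝕜 → β} (hf : StrictConvexOn 𝕜 s f) {x : 𝕜} (hx : x ∈ s) :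
    {y ∈ s | x < y ∧ f y = f x}.Subsingleton := by
  have not_lt_of_eq : ∀ y, x < y → f y = f x → ∀ z ∈ s, f z = f x → ¬ y < z := by
    intro y hxy hy z hzs hz hyz
    have hxz : x < z := hxy.trans hyz
    obtain ⟨a, b, ha, hb, hab, hcombo⟩ : y ∈ openSegment 𝕜 x z :=
      (openSegment_eq_Ioo hxz).symm ▸ ⟨hxy, hyz⟩
    have hlt : f y < f x := calc
      f y = f (a • x + b • z) := by rw [hcombo]
      _ < a • f x + b • f z := hf.2 hx hzs hxz.ne ha hb hab
      _ = f x := by rw [hz, Convex.combo_self hab]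
    exact hlt.ne hy
  rintro y ⟨hys, hxy, hy⟩ z ⟨hzs, hxz, hz⟩
  exact le_antisymm (not_lt.1 (not_lt_of_eq z hxz hz y hys hy))
    (not_lt.1 (not_lt_of_eq y hxy hy z hzs hz))

theorem halley_majorant_h_strictConvex_pos_unique_root_general {R : ℝ} {h h1 : ℝ → ℝ}
    (hd1 : ∀ t ∈ Ico 0 R, HasDerivWithinAt h (h1 t) (Ico 0 R) t)
    (hmono : StrictMonoOn h1 (Ico 0 R)) (h0 : 0 < h 0)
    {tstar : ℝ} (htsmem : tstar ∈ Ioo 0 R) (htszero : h tstar = 0)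
    (htsmin : ∀ t ∈ Ioo 0 R, h t = 0 → tstar ≤ t) :
    StrictConvexOn ℝ (Ico 0 R) h ∧
    (∀ t ∈ Ico 0 tstar, 0 < h t) ∧
    (∀ t₁ ∈ Ioo tstar R, ∀ t₂ ∈ Ioo tstar R, h t₁ = 0 → h t₂ = 0 → t₁ = t₂) := by
  have hconv : StrictConvexOn ℝ (Ico 0 R) h :=
    strictConvexOn_of_forall_hasDerivWithinAt_of_strictMonoOn (convex_Ico 0 R) hd1
      (hmono.mono interior_subset)
  have hcont : ContinuousOn h (Ico 0 tstar) :=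
    (HasDerivWithinAt.continuousOn hd1).mono (Ico_subset_Ico_right htsmem.2.le)
  have hne : ∀ t ∈ Ico 0 tstar, h t ≠ 0 := by
    rintro t ⟨ht0, htts⟩ hzero
    have htpos : 0 < t := ht0.lt_of_ne fun heq ↦ h0.ne' (heq ▸ hzero)
    exact (htsmin t ⟨htpos, htts.trans htsmem.2⟩ hzero).not_gt htts
  refine ⟨hconv, forall_lt_of_isPreconnected_of_forall_ne isPreconnected_Ico hcont hne
    ⟨le_rfl, htsmem.1⟩ h0, fun t₁ ht₁ t₂ ht₂ hzero₁ hzero₂ ↦ ?_⟩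
  exact subsingleton_setOf_gt_and_eq_of_strictConvexOn hconv (Ioo_subset_Ico_self htsmem)
    ⟨⟨(htsmem.1.trans ht₁.1).le, ht₁.2⟩, ht₁.1, hzero₁.trans htszero.symm⟩
    ⟨⟨(htsmem.1.trans ht₂.1).le, ht₂.2⟩, ht₂.1, hzero₂.trans htszero.symm⟩

/-- Under (A1)-(A3), `h` is strictly convex on `[0,R)`, positive on
`[0,t*)`, and `h = 0` has at most one root on `(t*,R)`. Here `h1` and `h2` denote
the first and second derivatives of `h` on `[0,R)`, and `tstar` is the smallest
zero of `h` in `(0,R)`. -/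
theorem halley_majorant_h_strictConvex_pos_unique_root
    (R : ℝ) (hR : 0 < R) (h h1 h2 : ℝ → ℝ)
    (hd1 : ∀ t ∈ Set.Ico (0:ℝ) R, HasDerivWithinAt h (h1 t) (Set.Ico 0 R) t)
    (hd2 : ∀ t ∈ Set.Ico (0:ℝ) R, HasDerivWithinAt h1 (h2 t) (Set.Ico 0 R) t)
    (hc2 : ContinuousOn h2 (Set.Ico 0 R))
    (hA1a : 0 < h 0) (hA1b : 0 < h2 0) (hA1c : h1 0 = -1)
    (hA2a : ConvexOn ℝ (Set.Ico 0 R) h2)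
    (hA2b : StrictMonoOn h2 (Set.Ico 0 R))
    (tstar : ℝ) (htsmem : tstar ∈ Set.Ioo 0 R) (htszero : h tstar = 0)
    (htsmin : ∀ t ∈ Set.Ioo (0:ℝ) R, h t = 0 → tstar ≤ t)
    (htsder : h1 tstar < 0) :
    StrictConvexOn ℝ (Set.Ico 0 R) h ∧
    (∀ t ∈ Set.Ico (0:ℝ) tstar, 0 < h t) ∧
    (∀ t₁ ∈ Set.Ioo tstar R, ∀ t₂ ∈ Set.Ioo tstar R, h t₁ = 0 → h t₂ = 0 → t₁ = t₂) := by
  have hmono : StrictMonoOn h1 (Ico 0 R) :=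
    strictMonoOn_of_forall_hasDerivWithinAt_of_pos (convex_Ico 0 R) hd2 fun t ht ↦
      hA1b.trans (hA2b ⟨le_rfl, hR⟩ (interior_subset ht) (interior_Ico.subset ht).1)
  exact halley_majorant_h_strictConvex_pos_unique_root_general hd1 hmono hA1a htsmem htszero htsmin
end

section
/- Let R > 0 and let h : [0,R) → ℝ be twice continuously differentiable satisfying assumptions (A1)–(A3), with t* the smallest zero of h in (0,R). Then 0 ≤ L_h(t) ≤ 1/4 for all t ∈ [0,t*], where L_h(t) = h(t)h''(t)/(2h'(t)²). -/
/-!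
Convexity of `h` and `h'(t*) < 0` force `h' < 0` on `[0, t*]`, so `h` decreases to `h(t*) = 0` and
`L_h ≥ 0`. For the upper bound fix `t` and consider `x ↦ h'(x)² - 2 h''(t) h(x)`. Its derivative
`2 h'(x) (h''(x) - h''(t))` is nonpositive for `x ≥ t`, because `h''` is increasing. Comparing the
values at `t` and `t*` gives `2 h''(t) h(t) ≤ h'(t)² - h'(t*)² ≤ h'(t)²`.
-/

open Set

section DerivativeSign

variable {D : Set ℝ} {f f' : ℝ → ℝ}

theorem monotoneOn_of_forall_hasDerivWithinAt_nonneg (hD : Convex ℝ D)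
    (hf : ∀ x ∈ D, HasDerivWithinAt f (f' x) D x) (hf'_nonneg : ∀ x ∈ D, 0 ≤ f' x) :
    MonotoneOn f D :=
  monotoneOn_of_hasDerivWithinAt_nonneg hD (fun x hx => (hf x hx).continuousWithinAt)
    (fun x hx => (hf x (interior_subset hx)).mono interior_subset)
    (fun x hx => hf'_nonneg x (interior_subset hx))

theorem antitoneOn_of_forall_hasDerivWithinAt_nonpos (hD : Convex ℝ D)
    (hf : ∀ x ∈ D, HasDerivWithinAt f (f' x) D x) (hf'_nonpos : ∀ x ∈ D, f' x ≤ 0) :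
    AntitoneOn f D :=
  antitoneOn_of_hasDerivWithinAt_nonpos hD (fun x hx => (hf x hx).continuousWithinAt)
    (fun x hx => (hf x (interior_subset hx)).mono interior_subset)
    (fun x hx => hf'_nonpos x (interior_subset hx))

end DerivativeSign

section SecondDerivative

variable {a b : ℝ} {f f' f'' : ℝ → ℝ}

theorem two_mul_mul_sub_le_sq_deriv_sub_sq_deriv {c : ℝ} (hab : a ≤ b)
    (hf : ∀ x ∈ Icc a b, HasDerivWithinAt f (f' x) (Icc a b) x)
    (hf' : ∀ x ∈ Icc a b, HasDerivWithinAt f' (f'' x) (Icc a b) x)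
    (hf'_nonpos : ∀ x ∈ Icc a b, f' x ≤ 0) (hc : ∀ x ∈ Icc a b, c ≤ f'' x) :
    2 * c * (f a - f b) ≤ f' a ^ 2 - f' b ^ 2 := by
  have hderiv : ∀ x ∈ Icc a b, HasDerivWithinAt (fun y => f' y ^ 2 - 2 * c * f y)
      (2 * f' x * (f'' x - c)) (Icc a b) x := fun x hx =>
    (((hf' x hx).fun_pow 2).fun_sub ((hf x hx).const_mul (2 * c))).congr_deriv
      (by push_cast; ring)
  have hanti : AntitoneOn (fun y => f' y ^ 2 - 2 * c * f y) (Icc a b) :=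
    antitoneOn_of_forall_hasDerivWithinAt_nonpos (convex_Icc a b) hderiv fun x hx =>
      mul_nonpos_of_nonpos_of_nonneg (by linarith [hf'_nonpos x hx]) (sub_nonneg.2 (hc x hx))
  have hends : f' b ^ 2 - 2 * c * f b ≤ f' a ^ 2 - 2 * c * f a :=
    hanti (left_mem_Icc.2 hab) (right_mem_Icc.2 hab) hab
  linarith

theorem halley_majorant_Lh_bounds_general
    (hf : ∀ x ∈ Icc a b, HasDerivWithinAt f (f' x) (Icc a b) x)
    (hf' : ∀ x ∈ Icc a b, HasDerivWithinAt f' (f'' x) (Icc a b) x)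
    (hf''_mono : MonotoneOn f'' (Icc a b)) (hf''a : 0 ≤ f'' a)
    (hfb : f b = 0) (hf'b : f' b < 0) :
    ∀ t ∈ Icc a b,
      0 ≤ f t * f'' t / (2 * f' t ^ 2) ∧ f t * f'' t / (2 * f' t ^ 2) ≤ 1 / 4 := by
  intro t ht
  have hab : a ≤ b := ht.1.trans ht.2
  have hf''_nonneg : ∀ x ∈ Icc a b, 0 ≤ f'' x := fun x hx =>
    hf''a.trans (hf''_mono (left_mem_Icc.2 hab) hx hx.1)
  have hf'_neg : ∀ x ∈ Icc a b, f' x < 0 := fun x hx =>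
    (monotoneOn_of_forall_hasDerivWithinAt_nonneg (convex_Icc a b) hf' hf''_nonneg
      hx (right_mem_Icc.2 hab) hx.2).trans_lt hf'b
  have hf_nonneg : 0 ≤ f t := hfb ▸
    antitoneOn_of_forall_hasDerivWithinAt_nonpos (convex_Icc a b) hf (fun x hx => (hf'_neg x hx).le)
      ht (right_mem_Icc.2 hab) ht.2
  have hsub : Icc t b ⊆ Icc a b := Icc_subset_Icc_left ht.1
  have henergy : 2 * f'' t * (f t - f b) ≤ f' t ^ 2 - f' b ^ 2 :=
    two_mul_mul_sub_le_sq_deriv_sub_sq_deriv ht.2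
      (fun x hx => (hf x (hsub hx)).mono hsub) (fun x hx => (hf' x (hsub hx)).mono hsub)
      (fun x hx => (hf'_neg x (hsub hx)).le) (fun x hx => hf''_mono ht (hsub hx) hx.1)
  have hsq_pos : 0 < f' t ^ 2 := sq_pos_of_neg (hf'_neg t ht)
  refine ⟨div_nonneg (mul_nonneg hf_nonneg (hf''_nonneg t ht)) (by positivity), ?_⟩
  rw [hfb] at henergy
  rw [div_le_iff₀ (by positivity)]
  linarith [sq_nonneg (f' b)]

end SecondDerivative

/-- Under (A1)-(A3), `0 ≤ L_h(t) ≤ 1/4` for all `t ∈ [0,t*]`, where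
`L_h(t) = h(t)h''(t)/(2h'(t)²)`. Here `h1` and `h2` denote the first and second
derivatives of `h` on `[0,R)`, and `tstar` is the smallest zero of `h` in `(0,R)`. -/
theorem halley_majorant_Lh_bounds
    (R : ℝ) (hR : 0 < R) (h h1 h2 : ℝ → ℝ)
    (hd1 : ∀ t ∈ Set.Ico (0:ℝ) R, HasDerivWithinAt h (h1 t) (Set.Ico 0 R) t)
    (hd2 : ∀ t ∈ Set.Ico (0:ℝ) R, HasDerivWithinAt h1 (h2 t) (Set.Ico 0 R) t)
    (hc2 : ContinuousOn h2 (Set.Ico 0 R))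
    (hA1a : 0 < h 0) (hA1b : 0 < h2 0) (hA1c : h1 0 = -1)
    (hA2a : ConvexOn ℝ (Set.Ico 0 R) h2)
    (hA2b : StrictMonoOn h2 (Set.Ico 0 R))
    (tstar : ℝ) (htsmem : tstar ∈ Set.Ioo 0 R) (htszero : h tstar = 0)
    (htsmin : ∀ t ∈ Set.Ioo (0:ℝ) R, h t = 0 → tstar ≤ t)
    (htsder : h1 tstar < 0) :
    ∀ t ∈ Set.Icc (0:ℝ) tstar,
      0 ≤ h t * h2 t / (2 * (h1 t) ^ 2) ∧ h t * h2 t / (2 * (h1 t) ^ 2) ≤ 1 / 4 := by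
  have hsub : Set.Icc 0 tstar ⊆ Set.Ico 0 R := Icc_subset_Ico_right htsmem.2
  exact halley_majorant_Lh_bounds_general
    (fun x hx => (hd1 x (hsub hx)).mono hsub) (fun x hx => (hd2 x (hsub hx)).mono hsub)
    (hA2b.monotoneOn.mono hsub) hA1b.le htszero htsder
end

section
/- Let R > 0 and let h : [0,R) → ℝ be twice continuously differentiable satisfying assumptions (A1)–(A3), with t* the smallest zero of h in (0,R). Then for all t ∈ [0,t*), t < H_h(t) < t*, where H_h(t) = t − (1/(1 − L_h(t)))·(h(t)/h'(t)) and L_h(t) = h(t)h''(t)/(2h'(t)²). -/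
/-!
Let `f(t) > 0 > f'(t)`, let `b > t` be a zero of `f`, and suppose `f'' ≥ q` on `(t, b)`,
where `q := f''(t) ≠ 0`.
Taylor's formula gives `f(t) + f'(t) d + q d² / 2 ≤ 0` with `d = b - t`. Multiplying by
`q d - 2 f'(t)`, when this is positive, cancels the terms `f'(t) q d²` and leaves
`f(t) (q d - 2 f'(t)) ≤ 2 f'(t)² d - q² d³ / 2 < 2 f'(t)² d`; when it is not, the outer terms
already compare by sign. This rearranges to `-2 f(t) f'(t) < d (2 f'(t)² - f(t) q)`, which forces
the last factor to be positive and says that the Halley increment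
`-2 f(t) f'(t) / (2 f'(t)² - f(t) q)` lies in `(0, d)`.
-/

open Set

/-- The Halley auxiliary function `L_f = f f'' / (2 f'²)`. As in the definition of `halleyMap`, the
derivatives `f'` and `f''` are passed as functions of their own, so that one-sided derivatives at
the endpoints of an interval can be used. -/
noncomputable def halleyAux (f f' f'' : ℝ → ℝ) (t : ℝ) : ℝ :=
  f t * f'' t / (2 * f' t ^ 2)

/-- The Halley iteration function `H_f = t - (1 / (1 - L_f)) (f / f')` for the equation `f = 0`. -/
noncomputable def halleyMap (f f' f'' : ℝ → ℝ) (t : ℝ) : ℝ :=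
  t - (1 / (1 - halleyAux f f' f'' t)) * (f t / f' t)

section Halley

variable {f f' f'' : ℝ → ℝ} {t a b q : ℝ}

theorem halleyMap_eq (hf' : f' t ≠ 0) :
    halleyMap f f' f'' t = t + -(2 * f t * f' t) / (2 * f' t ^ 2 - f t * f'' t) := by
  have one_sub_halleyAux :
      1 - halleyAux f f' f'' t = (2 * f' t ^ 2 - f t * f'' t) / (2 * f' t ^ 2) := by
    rw [halleyAux]
    field_simp
  rw [halleyMap, one_sub_halleyAux]
  field_simp
  ring

theorem quadratic_taylor_le_of_le_second_deriv (hab : a < b)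
    (hf : ∀ s ∈ Icc a b, HasDerivWithinAt f (f' s) (Icc a b) s)
    (hf' : ∀ s ∈ Ioo a b, HasDerivAt f' (f'' s) s)
    (hq : ∀ s ∈ Ioo a b, q ≤ f'' s) :
    f a + f' a * (b - a) + q * (b - a) ^ 2 / 2 ≤ f b := by
  let g s := f s - q * (s - a) ^ 2 / 2
  let g' s := f' s - q * (s - a)
  have hg : ∀ s ∈ Icc a b, HasDerivWithinAt g (g' s) (Icc a b) s := fun s hs ↦
    ((hf s hs).sub (((((hasDerivWithinAt_id s _).sub_const a).pow 2).const_mul q).div_const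
      2)).congr_deriv (by simp only [g', id_eq, Nat.cast_ofNat]; ring)
  have hg' : ∀ s ∈ Ioo a b, HasDerivAt g' (f'' s - q) s := fun s hs ↦
    ((hf' s hs).sub (((hasDerivAt_id s).sub_const a).const_mul q)).congr_deriv (by simp)
  have g_convex : ConvexOn ℝ (Icc a b) g := by
    refine convexOn_of_hasDerivWithinAt2_nonneg (f' := g') (f'' := fun s ↦ f'' s - q)
      (convex_Icc a b) (fun s hs ↦ (hg s hs).continuousWithinAt)
      (fun s hs ↦ (hg s (interior_subset hs)).mono interior_subset) ?_ ?_ <;>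
      rw [interior_Icc]
    · exact fun s hs ↦ (hg' s hs).hasDerivWithinAt
    · exact fun s hs ↦ sub_nonneg.2 (hq s hs)
  have tangent_le : g' a ≤ slope g a b :=
    g_convex.le_slope_of_hasDerivWithinAt (left_mem_Icc.2 hab.le) (right_mem_Icc.2 hab.le) hab
      (hg a (left_mem_Icc.2 hab.le))
  rw [slope_def_field, le_div_iff₀ (sub_pos.2 hab)] at tangent_le
  simp only [g, g', sub_self] at tangent_le
  linarith

theorem halley_increment_mem_Ioo {K : Type*} [Field K] [LinearOrder K] [IsStrictOrderedRing K]
    {y m q d : K} (hy : 0 < y) (hm : m < 0) (hq : q ≠ 0) (hd : 0 < d)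
    (hquad : y + m * d + q * d ^ 2 / 2 ≤ 0) :
    -(2 * y * m) / (2 * m ^ 2 - y * q) ∈ Ioo 0 d := by
  have mul_lt : y * (q * d - 2 * m) < 2 * m ^ 2 * d := by
    rcases le_or_gt (q * d - 2 * m) 0 with hnonpos | hpos
    · exact (mul_nonpos_of_nonneg_of_nonpos hy.le hnonpos).trans_lt (by have := hm.ne; positivity)
    · calc y * (q * d - 2 * m)
          ≤ (-(m * d) - q * d ^ 2 / 2) * (q * d - 2 * m) := by gcongr; linarith
        _ = 2 * m ^ 2 * d - q ^ 2 * d ^ 3 / 2 := by ring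
        _ < 2 * m ^ 2 * d := sub_lt_self _ (by positivity)
  have num_lt : -(2 * y * m) < d * (2 * m ^ 2 - y * q) := by linarith
  have num_pos : 0 < -(2 * y * m) := neg_pos.2 (mul_neg_of_pos_of_neg (by positivity) hm)
  have den_pos : 0 < 2 * m ^ 2 - y * q := pos_of_mul_pos_right (num_pos.trans num_lt) hd.le
  exact ⟨div_pos num_pos den_pos, (div_lt_iff₀ den_pos).2 num_lt⟩

theorem halleyMap_mem_Ioo (htb : t < b)
    (hf : ∀ s ∈ Icc t b, HasDerivWithinAt f (f' s) (Icc t b) s)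
    (hf' : ∀ s ∈ Ioo t b, HasDerivAt f' (f'' s) s)
    (hft''_le : ∀ s ∈ Ioo t b, f'' t ≤ f'' s) (hfb : f b = 0)
    (hft : 0 < f t) (hft' : f' t < 0) (hft'' : f'' t ≠ 0) :
    halleyMap f f' f'' t ∈ Ioo t b := by
  have taylor_nonpos : f t + f' t * (b - t) + f'' t * (b - t) ^ 2 / 2 ≤ 0 :=
    hfb ▸ quadratic_taylor_le_of_le_second_deriv htb hf hf' hft''_le
  obtain ⟨increment_pos, increment_lt⟩ :=
    halley_increment_mem_Ioo hft hft' hft'' (sub_pos.2 htb) taylor_nonpos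
  rw [halleyMap_eq hft'.ne]
  exact ⟨lt_add_of_pos_right t increment_pos, lt_sub_iff_add_lt'.1 increment_lt⟩

theorem halley_majorant_Hh_bounds_general
    (hf : ∀ s ∈ Icc a b, HasDerivWithinAt f (f' s) (Icc a b) s)
    (hf' : ∀ s ∈ Icc a b, HasDerivWithinAt f' (f'' s) (Icc a b) s)
    (hmono : MonotoneOn f'' (Icc a b)) (hfa'' : 0 < f'' a) (hfb : f b = 0) (hfb' : f' b < 0) :
    ∀ t ∈ Ico a b, halleyMap f f' f'' t ∈ Ioo t b := by
  intro t ht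
  have ht_mem : t ∈ Icc a b := Ico_subset_Icc_self ht
  have hsub : Icc t b ⊆ Icc a b := Icc_subset_Icc_left ht.1
  have hb_mem : b ∈ Icc a b := hsub (right_mem_Icc.2 ht.2.le)
  have hf''_pos : ∀ s ∈ Icc a b, 0 < f'' s := fun s hs ↦
    hfa''.trans_le (hmono (left_mem_Icc.2 (hs.1.trans hs.2)) hs hs.1)
  have hf'_mono : StrictMonoOn f' (Icc a b) :=
    strictMonoOn_of_hasDerivWithinAt_pos (convex_Icc a b) (fun s hs ↦ (hf' s hs).continuousWithinAt)
      (fun s hs ↦ (hf' s (interior_subset hs)).mono interior_subset)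
      (fun s hs ↦ hf''_pos s (interior_subset hs))
  have hf'_neg : ∀ s ∈ Icc a b, f' s < 0 := fun s hs ↦
    (hf'_mono.monotoneOn hs hb_mem hs.2).trans_lt hfb'
  have hf_anti : StrictAntiOn f (Icc a b) :=
    strictAntiOn_of_hasDerivWithinAt_neg (convex_Icc a b) (fun s hs ↦ (hf s hs).continuousWithinAt)
      (fun s hs ↦ (hf s (interior_subset hs)).mono interior_subset)
      (fun s hs ↦ hf'_neg s (interior_subset hs))
  exact halleyMap_mem_Ioo ht.2 (fun s hs ↦ (hf s (hsub hs)).mono hsub)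
    (fun s hs ↦ (hf' s (hsub (Ioo_subset_Icc_self hs))).hasDerivAt
      (Icc_mem_nhds (ht.1.trans_lt hs.1) hs.2))
    (fun s hs ↦ hmono ht_mem (hsub (Ioo_subset_Icc_self hs)) hs.1.le) hfb
    (hfb ▸ hf_anti ht_mem hb_mem ht.2) (hf'_neg t ht_mem) (hf''_pos t ht_mem).ne'

end Halley

/-- Under (A1)-(A3), `t < H_h(t) < t*` for all `t ∈ [0,t*)`, where
`H_h(t) = t - (1/(1 - L_h(t)))·(h(t)/h'(t))` and `L_h(t) = h(t)h''(t)/(2h'(t)²)`.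
Here `h1` and `h2` denote the first and second derivatives of `h` on `[0,R)`,
and `tstar` is the smallest zero of `h` in `(0,R)`. -/
theorem halley_majorant_Hh_bounds
    (R : ℝ) (hR : 0 < R) (h h1 h2 : ℝ → ℝ)
    (hd1 : ∀ t ∈ Set.Ico (0:ℝ) R, HasDerivWithinAt h (h1 t) (Set.Ico 0 R) t)
    (hd2 : ∀ t ∈ Set.Ico (0:ℝ) R, HasDerivWithinAt h1 (h2 t) (Set.Ico 0 R) t)
    (hc2 : ContinuousOn h2 (Set.Ico 0 R))
    (hA1a : 0 < h 0) (hA1b : 0 < h2 0) (hA1c : h1 0 = -1)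
    (hA2a : ConvexOn ℝ (Set.Ico 0 R) h2)
    (hA2b : StrictMonoOn h2 (Set.Ico 0 R))
    (tstar : ℝ) (htsmem : tstar ∈ Set.Ioo 0 R) (htszero : h tstar = 0)
    (htsmin : ∀ t ∈ Set.Ioo (0:ℝ) R, h t = 0 → tstar ≤ t)
    (htsder : h1 tstar < 0) :
    ∀ t ∈ Set.Ico (0:ℝ) tstar,
      t < t - (1 / (1 - h t * h2 t / (2 * (h1 t) ^ 2))) * (h t / h1 t) ∧
      t - (1 / (1 - h t * h2 t / (2 * (h1 t) ^ 2))) * (h t / h1 t) < tstar := by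
  have hsub : Icc 0 tstar ⊆ Ico 0 R := Icc_subset_Ico_right htsmem.2
  exact halley_majorant_Hh_bounds_general (fun s hs ↦ (hd1 s (hsub hs)).mono hsub)
    (fun s hs ↦ (hd2 s (hsub hs)).mono hsub) (hA2b.monotoneOn.mono hsub) hA1b htszero htsder
end

section
/- Let R > 0 and let h : [0,R) → ℝ be twice continuously differentiable satisfying (A1) h(0) > 0, h''(0) > 0, h'(0) = −1 and (A2) h'' is convex and strictly increasing on [0,R), and suppose h has a smallest zero t* in (0,R). Then h'(t*) < 0 if and only if there exists t ∈ (t*,R) such that h(t) < 0. -/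
/-! A tangent line of a convex function lies below its graph, so the right derivative at `x` is at
most the slope of every chord from `x` to a point on its right; a value smaller than `f x` there
makes that slope, hence the derivative, negative. Conversely, a negative right derivative forces
`f` below `f x` just to the right of `x`. A Halley majorant is convex because its second
derivative increases from a positive value. -/

open Set Filter Topology

lemma eventually_lt_of_hasDerivWithinAt_Ioi_neg {f : ℝ → ℝ} {f' x : ℝ}
    (hf : HasDerivWithinAt f f' (Ioi x) x) (hf' : f' < 0) : ∀ᶠ y in 𝓝[>] x, f y < f x := by
  filter_upwards [hf.limsup_slope_le' self_notMem_Ioi hf', self_mem_nhdsWithin] with y hslope hxy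
  exact (slope_neg_iff_of_le (le_of_lt hxy)).mp hslope

lemma convexOn_of_hasDerivWithinAt2_nonneg' {D : Set ℝ} (hD : Convex ℝ D)
    {f f' f'' : ℝ → ℝ} (hf' : ∀ x ∈ D, HasDerivWithinAt f (f' x) D x)
    (hf'' : ∀ x ∈ interior D, HasDerivWithinAt f' (f'' x) D x)
    (hf''_nonneg : ∀ x ∈ interior D, 0 ≤ f'' x) : ConvexOn ℝ D f :=
  convexOn_of_hasDerivWithinAt2_nonneg hD (fun x hx => (hf' x hx).continuousWithinAt)
    (fun x hx => (hf' x (interior_subset hx)).mono interior_subset)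
    (fun x hx => (hf'' x hx).mono interior_subset) hf''_nonneg

theorem halley_majorant_h'_neg_iff_exists_neg_general {S : Set ℝ} {f : ℝ → ℝ} {f' x : ℝ}
    (hf : ConvexOn ℝ S f) (hx : x ∈ S) (hS : S ∈ 𝓝[>] x) (hf' : HasDerivWithinAt f f' (Ioi x) x) :
    f' < 0 ↔ ∃ y ∈ S ∩ Ioi x, f y < f x := by
  constructor
  · intro hneg
    have hright : ∀ᶠ y in 𝓝[>] x, y ∈ S ∩ Ioi x := inter_mem hS self_mem_nhdsWithin
    exact (hright.and (eventually_lt_of_hasDerivWithinAt_Ioi_neg hf' hneg)).exists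
  · rintro ⟨y, ⟨hy, hxy⟩, hlt⟩
    calc
      f' ≤ slope f x y := hf.le_slope_of_hasDerivWithinAt_Ioi hx hy hxy hf'
      _ < 0 := (slope_neg_iff_of_le (le_of_lt hxy)).mpr hlt

/-- Under (A1) and (A2), if `tstar` is the smallest zero of `h` in
`(0,R)`, then `h'(t*) < 0` iff there exists `t ∈ (t*,R)` with `h(t) < 0`. Here
`h1` and `h2` denote the first and second derivatives of `h` on `[0,R)`. -/
theorem halley_majorant_h'_neg_iff_exists_neg
    (R : ℝ) (hR : 0 < R) (h h1 h2 : ℝ → ℝ)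
    (hd1 : ∀ t ∈ Set.Ico (0:ℝ) R, HasDerivWithinAt h (h1 t) (Set.Ico 0 R) t)
    (hd2 : ∀ t ∈ Set.Ico (0:ℝ) R, HasDerivWithinAt h1 (h2 t) (Set.Ico 0 R) t)
    (hc2 : ContinuousOn h2 (Set.Ico 0 R))
    (hA1a : 0 < h 0) (hA1b : 0 < h2 0) (hA1c : h1 0 = -1)
    (hA2a : ConvexOn ℝ (Set.Ico 0 R) h2)
    (hA2b : StrictMonoOn h2 (Set.Ico 0 R))
    (tstar : ℝ) (htsmem : tstar ∈ Set.Ioo 0 R) (htszero : h tstar = 0)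
    (htsmin : ∀ t ∈ Set.Ioo (0:ℝ) R, h t = 0 → tstar ≤ t) :
    h1 tstar < 0 ↔ ∃ t ∈ Set.Ioo tstar R, h t < 0 := by
  have htstar : tstar ∈ Ico 0 R := Ioo_subset_Ico_self htsmem
  have hright : Ico 0 R ∈ 𝓝[>] tstar :=
    mem_nhdsWithin_of_mem_nhds (Ico_mem_nhds htsmem.1 htsmem.2)
  have hh2_nonneg : ∀ t ∈ Ico 0 R, 0 ≤ h2 t := fun t ht =>
    hA1b.le.trans (hA2b.monotoneOn (left_mem_Ico.mpr hR) ht ht.1)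
  have hconvex : ConvexOn ℝ (Ico 0 R) h :=
    convexOn_of_hasDerivWithinAt2_nonneg' (convex_Ico 0 R) hd1
      (fun t ht => hd2 t (interior_subset ht)) (fun t ht => hh2_nonneg t (interior_subset ht))
  have hderiv : HasDerivWithinAt h (h1 tstar) (Ioi tstar) tstar :=
    (hd1 tstar htstar).mono_of_mem_nhdsWithin hright
  have hinter : Ico 0 R ∩ Ioi tstar = Ioo tstar R := by
    ext t
    exact ⟨fun ht => ⟨ht.2, ht.1.2⟩, fun ht => ⟨⟨htstar.1.trans ht.1.le, ht.2⟩, ht.1⟩⟩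
  simpa only [hinter, htszero] using
    halley_majorant_h'_neg_iff_exists_neg_general hconvex htstar hright hderiv
end

section
/- Let X, Y be Banach spaces, D ⊂ X open and convex, F : D → Y twice continuously Fréchet differentiable, and x₀ ∈ D with F'(x₀) invertible (as a continuous linear operator). Let h : [0,t*) → ℝ be twice continuously differentiable satisfying assumptions (A1)–(A3) and be a majorizing function to F at x₀. If x ∈ D satisfies ‖x − x₀‖ ≤ t < t*, then F'(x) is invertible and ‖F'(x)⁻¹F'(x₀)‖ ≤ −1/h'(‖x − x₀‖) ≤ −1/h'(t). In particular, F'(x) is invertible for every x ∈ B(x₀,t*). -/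
open Metric Set

/-!
Write `e₀ = F' x₀`. Comparing `F''` with its value at `x₀`, the majorant condition gives
`‖e₀⁻¹ F'' y‖ ≤ h'' ‖y - x₀‖`. Integrating along the segment from `x₀` to `x` yields
`‖e₀⁻¹ (F' x - F' x₀)‖ ≤ h' ‖x - x₀‖ - h' 0 = 1 + h' ‖x - x₀‖`. Up to `t*` the increasing function
`h'` is negative, so the right-hand side is smaller than `1` and the Neumann series inverts
`e₀⁻¹ F' x`, the inverse having norm at most `-1 / h' ‖x - x₀‖`.
-/

section MeanValue

variable {𝕜 E G Z : Type*} [RCLike 𝕜] [NormedAddCommGroup E] [NormedSpace 𝕜 E]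
  [NormedAddCommGroup G] [NormedSpace 𝕜 G] [NormedAddCommGroup Z] [NormedSpace 𝕜 Z]

theorem norm_image_sub_le_of_norm_hasFDerivWithinAt_le_radial [NormedSpace ℝ E]
    {f : E → G} {f' : E → E →L[𝕜] G} {φ φ' : ℝ → ℝ} {s : Set E} {x₀ x : E}
    (hs : StarConvex ℝ x₀ s) (hx : x ∈ s)
    (hf : ∀ y ∈ s, HasFDerivWithinAt f (f' y) s y)
    (hφ : ∀ t ∈ Icc 0 ‖x - x₀‖, HasDerivWithinAt φ (φ' t) (Icc 0 ‖x - x₀‖) t)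
    (bound : ∀ y ∈ s, ‖y - x₀‖ ≤ ‖x - x₀‖ → ‖f' y‖ ≤ φ' ‖y - x₀‖) :
    ‖f x - f x₀‖ ≤ φ ‖x - x₀‖ - φ 0 := by
  let : NormedSpace ℝ G := .restrictScalars ℝ 𝕜 G
  set r := ‖x - x₀‖
  set γ : ℝ → E := ⇑(AffineMap.lineMap x₀ x : ℝ →ᵃ[ℝ] E)
  have hγs : MapsTo γ (Icc 0 1) s := fun t ht => by
    simpa [γ, AffineMap.lineMap_apply, add_comm] using hs.add_smul_sub_mem hx ht.1 ht.2
  have hγ_norm : ∀ t ∈ Icc (0 : ℝ) 1, ‖γ t - x₀‖ = t * r := fun t ht => by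
    simp [γ, r, AffineMap.lineMap_apply, norm_smul, abs_of_nonneg ht.1]
  have hmul : MapsTo (· * r) (Icc 0 1) (Icc 0 r) := fun t ht =>
    ⟨mul_nonneg ht.1 (norm_nonneg _), mul_le_of_le_one_left (norm_nonneg _) ht.2⟩
  have hfγ : ∀ t ∈ Icc (0 : ℝ) 1,
      HasDerivWithinAt (fun t => f (γ t) - f x₀) (f' (γ t) (x - x₀)) (Icc 0 1) t := fun t ht =>
    (((hf (γ t) (hγs ht)).restrictScalars ℝ).comp_hasDerivWithinAt t
      AffineMap.hasDerivWithinAt_lineMap hγs).sub_const _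
  have hφr : ∀ t ∈ Icc (0 : ℝ) 1,
      HasDerivWithinAt (fun t => φ (t * r) - φ 0) (φ' (t * r) * r) (Icc 0 1) t := fun t ht =>
    ((hφ _ (hmul ht)).comp t (hasDerivAt_mul_const r).hasDerivWithinAt hmul).sub_const _
  have hbound : ∀ t ∈ Icc (0 : ℝ) 1, ‖f' (γ t) (x - x₀)‖ ≤ φ' (t * r) * r := fun t ht => by
    have hle := bound (γ t) (hγs ht) ((hγ_norm t ht).trans_le (hmul ht).2)
    rw [hγ_norm t ht] at hle
    exact (f' (γ t)).le_of_opNorm_le hle _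
  have hfence := image_norm_le_of_norm_deriv_right_le_deriv_boundary'
    (fun t ht => (hfγ t ht).continuousWithinAt)
    (fun t ht => (hfγ t (Ico_subset_Icc_self ht)).mono_of_mem_nhdsWithin (Icc_mem_nhdsGE_of_mem ht))
    (by simp [γ])
    (fun t ht => (hφr t ht).continuousWithinAt)
    (fun t ht => (hφr t (Ico_subset_Icc_self ht)).mono_of_mem_nhdsWithin (Icc_mem_nhdsGE_of_mem ht))
    (fun t ht => hbound t (Ico_subset_Icc_self ht))
  simpa [γ] using hfence (right_mem_Icc.2 zero_le_one)

theorem norm_comp_sub_le_of_norm_compL_comp_le_radial (L : G →L[𝕜] Z)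
    {f : E → E →L[𝕜] G} {f' : E → E →L[𝕜] E →L[𝕜] G} {φ φ' : ℝ → ℝ} {x₀ x : E} {R : ℝ}
    (hx : x ∈ ball x₀ R) (hf : ∀ y ∈ ball x₀ R, HasFDerivAt f (f' y) y)
    (hφ : ∀ t ∈ Ico 0 R, HasDerivWithinAt φ (φ' t) (Ico 0 R) t)
    (bound : ∀ y ∈ ball x₀ R,
      ‖(ContinuousLinearMap.compL 𝕜 E G Z L).comp (f' y)‖ ≤ φ' ‖y - x₀‖) :
    ‖L.comp (f x - f x₀)‖ ≤ φ ‖x - x₀‖ - φ 0 := by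
  let : NormedSpace ℝ E := .restrictScalars ℝ 𝕜 E
  let C := ContinuousLinearMap.compL 𝕜 E G Z L
  have hIcc : Icc 0 ‖x - x₀‖ ⊆ Ico 0 R := Icc_subset_Ico_right (mem_ball_iff_norm.1 hx)
  rw [ContinuousLinearMap.comp_sub]
  exact norm_image_sub_le_of_norm_hasFDerivWithinAt_le_radial (f := fun y => C (f y))
    ((convex_ball x₀ R).starConvex (mem_ball_self (pos_of_mem_ball hx))) hx
    (fun y hy => (C.hasFDerivAt.comp y (hf y hy)).hasFDerivWithinAt)
    (fun t ht => (hφ t (hIcc ht)).mono hIcc) (fun y hy _ => bound y hy)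

end MeanValue

theorem exists_continuousLinearEquiv_of_norm_symm_comp_sub_le {𝕜 X Y : Type*}
    [NontriviallyNormedField 𝕜] [NormedAddCommGroup X] [NormedSpace 𝕜 X] [CompleteSpace X]
    [NormedAddCommGroup Y] [NormedSpace 𝕜 Y] (e₀ : X ≃L[𝕜] Y) {A : X →L[𝕜] Y} {c : ℝ}
    (hA : ‖(e₀.symm : Y →L[𝕜] X).comp (A - (e₀ : X →L[𝕜] Y))‖ ≤ c) (hc : c < 1) :
    ∃ e : X ≃L[𝕜] Y, (e : X →L[𝕜] Y) = A ∧
      ‖(e.symm : Y →L[𝕜] X).comp (e₀ : X →L[𝕜] Y)‖ ≤ (1 - c)⁻¹ := by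
  set T : X →L[𝕜] X := -(e₀.symm : Y →L[𝕜] X).comp (A - (e₀ : X →L[𝕜] Y)) with hT_def
  have hTc : ‖T‖ ≤ c := (norm_neg _).trans_le hA
  have hT : ‖T‖ < 1 := hTc.trans_lt hc
  let U := Units.oneSub T hT
  let e : X ≃L[𝕜] Y := (ContinuousLinearEquiv.ofUnit U).trans e₀
  refine ⟨e, ?_, ?_⟩
  · ext v
    change e₀ ((1 - T) v) = A v
    simp [hT_def]
  · have hsymm : (e.symm : Y →L[𝕜] X).comp (e₀ : X →L[𝕜] Y) = (↑U⁻¹ : X →L[𝕜] X) := by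
      ext v
      exact congrArg (↑U⁻¹ : X →L[𝕜] X) (e₀.symm_apply_apply v)
    calc ‖(e.symm : Y →L[𝕜] X).comp (e₀ : X →L[𝕜] Y)‖
        = ‖∑' n : ℕ, T ^ n‖ := congrArg _ hsymm
      _ ≤ ‖(1 : X →L[𝕜] X)‖ - 1 + (1 - ‖T‖)⁻¹ := tsum_geometric_le_of_norm_lt_one T hT
      _ ≤ (1 - ‖T‖)⁻¹ := add_le_of_nonpos_left (sub_nonpos.2 ContinuousLinearMap.norm_id_le)
      _ ≤ (1 - c)⁻¹ := inv_anti₀ (sub_pos.2 hc) (sub_le_sub_left hTc 1)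

theorem halley_majorant_F'_invertible_general {𝕜 X Y : Type*} [RCLike 𝕜]
    [NormedAddCommGroup X] [NormedSpace 𝕜 X] [CompleteSpace X]
    [NormedAddCommGroup Y] [NormedSpace 𝕜 Y]
    {F' : X → X →L[𝕜] Y} {F'' : X → X →L[𝕜] X →L[𝕜] Y} {x₀ : X} {R : ℝ}
    (hdF' : ∀ x ∈ ball x₀ R, HasFDerivAt F' (F'' x) x)
    {e0 : X ≃L[𝕜] Y} (he0 : (e0 : X →L[𝕜] Y) = F' x₀) {h1 h2 : ℝ → ℝ}
    (hd2 : ∀ t ∈ Ico 0 R, HasDerivWithinAt h1 (h2 t) (Ico 0 R) t)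
    (h1_zero : h1 0 = -1) (h2_nonneg : ∀ t ∈ Ico 0 R, 0 ≤ h2 t)
    (bound : ∀ x ∈ ball x₀ R,
      ‖(ContinuousLinearMap.compL 𝕜 X Y X (e0.symm : Y →L[𝕜] X)).comp (F'' x)‖ ≤ h2 ‖x - x₀‖)
    {r : ℝ} (hrR : r < R) (hr : h1 r < 0) (x : X) (t : ℝ) (hxt : ‖x - x₀‖ ≤ t) (htr : t ≤ r) :
    ∃ e : X ≃L[𝕜] Y, (e : X →L[𝕜] Y) = F' x ∧
      ‖(e.symm : Y →L[𝕜] X).comp (F' x₀)‖ ≤ -1 / h1 ‖x - x₀‖ ∧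
      -1 / h1 ‖x - x₀‖ ≤ -1 / h1 t := by
  have h1_mono : MonotoneOn h1 (Ico 0 R) :=
    monotoneOn_of_hasDerivWithinAt_nonneg (convex_Ico 0 R)
      (fun s hs => (hd2 s hs).continuousWithinAt)
      (fun s hs => (hd2 s (interior_subset hs)).mono interior_subset)
      (fun s hs => h2_nonneg s (interior_subset hs))
  have ht₀ : 0 ≤ t := (norm_nonneg _).trans hxt
  have ht : t ∈ Ico 0 R := ⟨ht₀, htr.trans_lt hrR⟩
  have hx : ‖x - x₀‖ ∈ Ico 0 R := ⟨norm_nonneg _, hxt.trans_lt ht.2⟩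
  have h1_t : h1 t < 0 := (h1_mono ht ⟨ht₀.trans htr, hrR⟩ htr).trans_lt hr
  have h1_le : h1 ‖x - x₀‖ ≤ h1 t := h1_mono hx ht hxt
  have hdist : ‖(e0.symm : Y →L[𝕜] X).comp (F' x - (e0 : X →L[𝕜] Y))‖ ≤
      h1 ‖x - x₀‖ + 1 := by
    simpa only [he0, h1_zero, sub_neg_eq_add] using
      norm_comp_sub_le_of_norm_compL_comp_le_radial (e0.symm : Y →L[𝕜] X)
        (mem_ball_iff_norm.2 hx.2) hdF' hd2 bound
  obtain ⟨e, he, he_symm⟩ :=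
    exists_continuousLinearEquiv_of_norm_symm_comp_sub_le e0 hdist (by linarith)
  refine ⟨e, he, ?_, ?_⟩
  · calc ‖(e.symm : Y →L[𝕜] X).comp (F' x₀)‖
        ≤ (1 - (h1 ‖x - x₀‖ + 1))⁻¹ := he0 ▸ he_symm
      _ = -1 / h1 ‖x - x₀‖ := by rw [sub_add_cancel_right, inv_neg, neg_div, one_div]
  · simpa only [neg_div] using neg_le_neg (one_div_le_one_div_of_neg_of_le h1_t h1_le)

/-- if `h` is a majorizing function to `F` at `x₀` satisfying
(A1)-(A3), and `‖x - x₀‖ ≤ t < t*`, then `F'(x)` is invertible with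
`‖F'(x)⁻¹F'(x₀)‖ ≤ -1/h'(‖x - x₀‖) ≤ -1/h'(t)`; in particular `F'` is invertible
on the ball `B(x₀,t*)`. Here `F'`, `F''` are the first two Fréchet derivatives
of `F`, `h1`, `h2` are the first two derivatives of `h`, the invertibility of
`F'(x₀)` is witnessed by the continuous linear equivalence `e0`, and `tstar` is
the smallest zero of `h` in `(0,R)`. -/
theorem halley_majorant_F'_invertible
    {X Y : Type*} [NormedAddCommGroup X] [NormedSpace ℝ X] [CompleteSpace X]
    [NormedAddCommGroup Y] [NormedSpace ℝ Y] [CompleteSpace Y]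
    (D : Set X) (hD : IsOpen D) (hDconv : Convex ℝ D)
    (F : X → Y) (F' : X → X →L[ℝ] Y) (F'' : X → X →L[ℝ] X →L[ℝ] Y)
    (hdF : ∀ x ∈ D, HasFDerivAt F (F' x) x)
    (hdF' : ∀ x ∈ D, HasFDerivAt F' (F'' x) x)
    (hcF'' : ContinuousOn F'' D)
    (x₀ : X) (hx₀ : x₀ ∈ D)
    (e0 : X ≃L[ℝ] Y) (he0 : (e0 : X →L[ℝ] Y) = F' x₀)
    (R : ℝ) (hR : 0 < R) (hballD : ball x₀ R ⊆ D)
    (h h1 h2 : ℝ → ℝ)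
    (hd1 : ∀ t ∈ Ico (0:ℝ) R, HasDerivWithinAt h (h1 t) (Ico 0 R) t)
    (hd2 : ∀ t ∈ Ico (0:ℝ) R, HasDerivWithinAt h1 (h2 t) (Ico 0 R) t)
    (hc2 : ContinuousOn h2 (Ico 0 R))
    (hA1a : 0 < h 0) (hA1b : 0 < h2 0) (hA1c : h1 0 = -1)
    (hA2a : ConvexOn ℝ (Ico 0 R) h2) (hA2b : StrictMonoOn h2 (Ico 0 R))
    (tstar : ℝ) (htsmem : tstar ∈ Ioo 0 R) (htszero : h tstar = 0)
    (htsmin : ∀ s ∈ Ioo (0:ℝ) R, h s = 0 → tstar ≤ s) (htsder : h1 tstar < 0)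
    (hmaj : ∀ x ∈ ball x₀ R, ∀ y ∈ ball x₀ R, ‖y - x‖ + ‖x - x₀‖ < R →
      ‖(ContinuousLinearMap.compL ℝ X Y X (e0.symm : Y →L[ℝ] X)).comp
          (F'' y - F'' x)‖ ≤ h2 (‖y - x‖ + ‖x - x₀‖) - h2 ‖x - x₀‖)
    (hinit1 : ‖(e0.symm : Y →L[ℝ] X) (F x₀)‖ ≤ h 0)
    (hinit2 : ‖(ContinuousLinearMap.compL ℝ X Y X (e0.symm : Y →L[ℝ] X)).comp
        (F'' x₀)‖ ≤ h2 0)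
    (x : X) (t : ℝ) (hxt : ‖x - x₀‖ ≤ t) (ht : t < tstar) :
    (∃ e : X ≃L[ℝ] Y, (e : X →L[ℝ] Y) = F' x ∧
      ‖(e.symm : Y →L[ℝ] X).comp (F' x₀)‖ ≤ -1 / h1 ‖x - x₀‖ ∧
      -1 / h1 ‖x - x₀‖ ≤ -1 / h1 t) ∧
    (∀ z ∈ ball x₀ tstar, ∃ e : X ≃L[ℝ] Y, (e : X →L[ℝ] Y) = F' z) := by
  have hF'' : ∀ z ∈ ball x₀ R,
      ‖(ContinuousLinearMap.compL ℝ X Y X (e0.symm : Y →L[ℝ] X)).comp (F'' z)‖ ≤ h2 ‖z - x₀‖ := by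
    intro z hz
    have hz_sub := hmaj x₀ (mem_ball_self hR) z hz (by simpa using mem_ball_iff_norm.1 hz)
    rw [ContinuousLinearMap.comp_sub, sub_self, norm_zero, add_zero] at hz_sub
    calc _ ≤ h2 0 + (h2 ‖z - x₀‖ - h2 0) :=
          (norm_le_norm_add_norm_sub' _ _).trans (add_le_add hinit2 hz_sub)
      _ = h2 ‖z - x₀‖ := add_sub_cancel _ _
  have hF' := halley_majorant_F'_invertible_general (fun z hz => hdF' z (hballD hz)) he0 hd2 hA1c
    (fun s hs => hA1b.le.trans (hA2b.monotoneOn ⟨le_rfl, hR⟩ hs hs.1)) hF'' htsmem.2 htsder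
  exact ⟨hF' x t hxt ht.le,
    fun z hz => (hF' z _ le_rfl (mem_ball_iff_norm.1 hz).le).imp fun _ he => he.1⟩
end

section
/- Let X, Y be Banach spaces, D ⊂ X open and convex, F : D → Y twice continuously Fréchet differentiable, and x₀ ∈ D with F'(x₀) invertible. Let h satisfy assumptions (A1)–(A3) with smallest zero t*, and be a majorizing function to F at x₀. Then the sequence (x_k) generated by Halley's method x_{k+1} = x_k − [I − L_F(x_k)]⁻¹F'(x_k)⁻¹F(x_k) with starting point x₀ is well defined (all the required inverse operators exist at each step), is contained in the open ball B(x₀,t*), and converges to a point x* in the closed ball of center x₀ and radius t* which satisfies F(x*) = 0. Moreover ‖x* − x_k‖ ≤ t* − t_k for all k, where (t_k) is the majorizing sequence t_0 = 0, t_{k+1} = t_k − (1/(1 − L_h(t_k)))·(h(t_k)/h'(t_k)). -/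
open Metric Set

/-!
After multiplying by `F'(x₀)⁻¹` one may assume `F : X → X` and `F'(x₀) = I`. The invariant carried
along the iteration is `‖x_k - x₀‖ ≤ t_k` and `‖F(x_k)‖ ≤ h(t_k)`. Under it the derivatives of `F`
at `x_k` are controlled by those of `h` at `t_k`, so both inverses in the Halley step exist by
Neumann series and the step is no longer than the scalar one. The Halley step `δ = x_{k+1} - x_k`
satisfies
`F(x_k) + F'(x_k) δ + ½ F''(x_k) δ δ = ½ F''(x_k) (δ + F'(x_k)⁻¹ F(x_k)) δ`,
and the scalar step satisfies the same identity with `h`. Hence `F(x_{k+1})` is this quadratic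
residual plus a second order Taylor remainder, each dominated by its scalar counterpart; the two
counterparts add up to `h(t_{k+1})`.
-/

section MeanValue

variable {E : Type*} [NormedAddCommGroup E] [NormedSpace ℝ E]
  {f f' f'' : ℝ → E} {B B' B'' : ℝ → ℝ} {a b : ℝ}

theorem norm_sub_le_sub_of_norm_deriv_le
    (hf : ∀ τ ∈ Icc a b, HasDerivWithinAt f (f' τ) (Icc a b) τ)
    (hB : ∀ τ ∈ Icc a b, HasDerivWithinAt B (B' τ) (Icc a b) τ)
    (hle : ∀ τ ∈ Icc a b, ‖f' τ‖ ≤ B' τ) {τ : ℝ} (hτ : τ ∈ Icc a b) :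
    ‖f τ - f a‖ ≤ B τ - B a := by
  have mem_nhdsGE : ∀ s ∈ Ico a b, Icc a b ∈ nhdsWithin s (Ici s) := fun s hs =>
    Filter.mem_of_superset (Icc_mem_nhdsGE hs.2) (Icc_subset_Icc_left hs.1)
  have hf₀ : ∀ s ∈ Icc a b, HasDerivWithinAt (fun u => f u - f a) (f' s) (Icc a b) s :=
    fun s hs => (hf s hs).sub_const _
  have hB₀ : ∀ s ∈ Icc a b, HasDerivWithinAt (fun u => B u - B a) (B' s) (Icc a b) s :=
    fun s hs => (hB s hs).sub_const _
  exact image_norm_le_of_norm_deriv_right_le_deriv_boundary'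
    (fun s hs => (hf₀ s hs).continuousWithinAt)
    (fun s hs => (hf₀ s (Ico_subset_Icc_self hs)).mono_of_mem_nhdsWithin (mem_nhdsGE s hs))
    (by simp) (fun s hs => (hB₀ s hs).continuousWithinAt)
    (fun s hs => (hB₀ s (Ico_subset_Icc_self hs)).mono_of_mem_nhdsWithin (mem_nhdsGE s hs))
    (fun s hs => hle s (Ico_subset_Icc_self hs)) hτ

theorem norm_taylor_one_remainder_le
    (hf : ∀ τ ∈ Icc a b, HasDerivWithinAt f (f' τ) (Icc a b) τ)
    (hB : ∀ τ ∈ Icc a b, HasDerivWithinAt B (B' τ) (Icc a b) τ)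
    (hle : ∀ τ ∈ Icc a b, ‖f' τ - f' a‖ ≤ B' τ - B' a) {τ : ℝ} (hτ : τ ∈ Icc a b) :
    ‖f τ - f a - (τ - a) • f' a‖ ≤ B τ - B a - (τ - a) * B' a := by
  have hlin (s : ℝ) : HasDerivWithinAt (fun u : ℝ => u - a) 1 (Icc a b) s :=
    (hasDerivWithinAt_id s _).sub_const a
  have key := norm_sub_le_sub_of_norm_deriv_le
    (f := fun u => f u - (u - a) • f' a) (B := fun u => B u - (u - a) * B' a)
    (fun s hs => (hf s hs).sub ((hlin s).smul_const (f' a)))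
    (fun s hs => (hB s hs).sub ((hlin s).mul_const (B' a)))
    (by simpa using hle) hτ
  simpa [sub_right_comm] using key

theorem norm_taylor_two_remainder_le
    (hf : ∀ τ ∈ Icc a b, HasDerivWithinAt f (f' τ) (Icc a b) τ)
    (hf' : ∀ τ ∈ Icc a b, HasDerivWithinAt f' (f'' τ) (Icc a b) τ)
    (hB : ∀ τ ∈ Icc a b, HasDerivWithinAt B (B' τ) (Icc a b) τ)
    (hB' : ∀ τ ∈ Icc a b, HasDerivWithinAt B' (B'' τ) (Icc a b) τ)
    (hle : ∀ τ ∈ Icc a b, ‖f'' τ - f'' a‖ ≤ B'' τ - B'' a) {τ : ℝ} (hτ : τ ∈ Icc a b) :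
    ‖f τ - f a - (τ - a) • f' a - ((τ - a) ^ 2 / 2) • f'' a‖
      ≤ B τ - B a - (τ - a) * B' a - (τ - a) ^ 2 / 2 * B'' a := by
  have hlin (s : ℝ) : HasDerivWithinAt (fun u : ℝ => u - a) 1 (Icc a b) s :=
    (hasDerivWithinAt_id s _).sub_const a
  have hquad (s : ℝ) : HasDerivWithinAt (fun u : ℝ => (u - a) ^ 2 / 2) (s - a) (Icc a b) s := by
    simpa using ((hlin s).pow 2).div_const 2
  have key := norm_sub_le_sub_of_norm_deriv_le
    (f := fun u => f u - (u - a) • f' a - ((u - a) ^ 2 / 2) • f'' a)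
    (B := fun u => B u - (u - a) * B' a - (u - a) ^ 2 / 2 * B'' a)
    (fun s hs => ((hf s hs).sub ((hlin s).smul_const (f' a))).sub ((hquad s).smul_const (f'' a)))
    (fun s hs => ((hB s hs).sub ((hlin s).mul_const (B' a))).sub ((hquad s).mul_const (B'' a)))
    (fun s hs => by simpa using norm_taylor_one_remainder_le hf' hB' hle hs) hτ
  simpa [sub_right_comm] using key

end MeanValue

theorem convexOn_add_sub_le_add_sub {𝕜 : Type*} [Field 𝕜] [LinearOrder 𝕜] [IsStrictOrderedRing 𝕜]
    {s : Set 𝕜} {f : 𝕜 → 𝕜} (hf : ConvexOn 𝕜 s f) {a b p : 𝕜} (ha : a ∈ s) (hb : b + p ∈ s)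
    (hab : a ≤ b) (hp : 0 ≤ p) : f (a + p) - f a ≤ f (b + p) - f b := by
  obtain rfl | hp := hp.eq_or_lt
  · simp
  have mem_of_mem_Icc {c : 𝕜} (hc : c ∈ Icc a (b + p)) : c ∈ s := hf.1.ordConnected.out ha hb hc
  have hab_left : (f (a + p) - f a) / (a + p - a) ≤ (f (b + p) - f a) / (b + p - a) :=
    hf.secant_mono ha (mem_of_mem_Icc ⟨by linarith, by linarith⟩) hb (by linarith) (by linarith)
      (by linarith)
  have hab_right : (f a - f (b + p)) / (a - (b + p)) ≤ (f b - f (b + p)) / (b - (b + p)) :=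
    hf.secant_mono hb ha (mem_of_mem_Icc ⟨hab, by linarith⟩) (by linarith) (by linarith) hab
  rw [← neg_div_neg_eq, neg_sub, neg_sub, ← neg_div_neg_eq (f b - _), neg_sub, neg_sub] at hab_right
  have := hab_left.trans hab_right
  rwa [add_sub_cancel_left, add_sub_cancel_left, div_le_div_iff_of_pos_right hp] at this

theorem exists_continuousLinearEquiv_eq_id_sub {𝕜 X : Type*} [NontriviallyNormedField 𝕜]
    [NormedAddCommGroup X] [NormedSpace 𝕜 X] [CompleteSpace X] {T : X →L[𝕜] X} {q : ℝ}
    (hT : ‖T‖ ≤ q) (hq : q < 1) :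
    ∃ u : X ≃L[𝕜] X, (u : X →L[𝕜] X) = ContinuousLinearMap.id 𝕜 X - T ∧
      ∀ v, ‖u.symm v‖ ≤ ‖v‖ / (1 - q) := by
  let u := ContinuousLinearEquiv.unitsEquiv 𝕜 X (Units.oneSub T (hT.trans_lt hq))
  have hu : (u : X →L[𝕜] X) = ContinuousLinearMap.id 𝕜 X - T := rfl
  refine ⟨u, hu, fun v => ?_⟩
  have hv : u.symm v - T (u.symm v) = v := by
    simpa using (DFunLike.congr_fun hu (u.symm v)).symm
  have hle : ‖u.symm v‖ ≤ ‖v‖ + q * ‖u.symm v‖ := calc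
    ‖u.symm v‖ = ‖v + T (u.symm v)‖ := by rw [← sub_eq_iff_eq_add.1 hv]
    _ ≤ ‖v‖ + q * ‖u.symm v‖ := norm_add_le_of_le le_rfl (T.le_of_opNorm_le hT _)
  rw [le_div_iff₀ (by linarith)]
  linarith

theorem exists_seq_of_forall_exists_next {α : Type*} {P : ℕ → α → Prop} {r : ℕ → α → α → Prop}
    {a : α} (ha : P 0 a) (hnext : ∀ k x, P k x → ∃ y, r k x y ∧ P (k + 1) y) :
    ∃ x : ℕ → α, x 0 = a ∧ ∀ k, P k (x k) ∧ r k (x k) (x (k + 1)) := by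
  have : Nonempty α := ⟨a⟩
  choose! next hr hP using hnext
  let x : ℕ → α := Nat.rec a next
  have hx : ∀ k, P k (x k) := Nat.rec ha fun k ih => hP k (x k) ih
  exact ⟨x, rfl, fun k => ⟨hx k, hr k (x k) (hx k)⟩⟩

theorem exists_tendsto_of_dist_le_sub {α : Type*} [PseudoMetricSpace α] [CompleteSpace α]
    {x : ℕ → α} {t : ℕ → ℝ} {c : ℝ} (hdist : ∀ k, dist (x k) (x (k + 1)) ≤ t (k + 1) - t k)
    (ht : Filter.Tendsto t Filter.atTop (nhds c)) :
    ∃ z, Filter.Tendsto x Filter.atTop (nhds z) ∧ ∀ k, dist (x k) z ≤ c - t k := by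
  have hmono : Monotone t :=
    monotone_nat_of_le_succ fun k => sub_nonneg.1 (dist_nonneg.trans (hdist k))
  have hdist_le (k j : ℕ) (hkj : k ≤ j) : dist (x k) (x j) ≤ c - t k := calc
    dist (x k) (x j) ≤ ∑ i ∈ Finset.Ico k j, (t (i + 1) - t i) :=
      dist_le_Ico_sum_of_dist_le hkj fun _ _ => hdist _
    _ = t j - t k := Finset.sum_Ico_sub t hkj
    _ ≤ c - t k := by linarith [hmono.ge_of_tendsto ht j]
  have hcauchy : CauchySeq x :=
    cauchySeq_of_le_tendsto_0' (fun k => c - t k) hdist_le (by simpa using ht.const_sub c)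
  obtain ⟨z, hz⟩ := cauchySeq_tendsto_of_complete hcauchy
  refine ⟨z, hz, fun k => le_of_tendsto (tendsto_const_nhds.dist hz) ?_⟩
  filter_upwards [Filter.eventually_ge_atTop k] with j hj using hdist_le k j hj

section ScalarStep

variable {a b c d : ℝ}

/-- The scalar Halley factor `L_h = h h'' / (2 h'²)` at a point where `h`, `h'` and `h''` take the
values `a`, `b` and `c`. -/
noncomputable def halleyFactor (a b c : ℝ) : ℝ :=
  a * c / (2 * b ^ 2)

/-- The scalar Halley correction `(1 - L_h)⁻¹ h / h'` at a point where `h`, `h'` and `h''` take the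
values `a`, `b` and `c`; the scalar iteration subtracts it from the current iterate. -/
noncomputable def halleyCorrection (a b c : ℝ) : ℝ :=
  (1 / (1 - halleyFactor a b c)) * (a / b)

theorem halleyFactor_neg (a b c : ℝ) : halleyFactor a (-b) c = halleyFactor a b c := by
  rw [halleyFactor, neg_sq, halleyFactor]

theorem halleyCorrection_neg (a b c : ℝ) : halleyCorrection a (-b) c = -halleyCorrection a b c := by
  rw [halleyCorrection, halleyFactor_neg, div_neg, mul_neg, halleyCorrection]

theorem halleyCorrection_nonneg (ha : 0 ≤ a) (hb : 0 ≤ b) (hL : halleyFactor a b c < 1) :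
    0 ≤ halleyCorrection a b c :=
  mul_nonneg (one_div_nonneg.2 (sub_nonneg.2 hL.le)) (div_nonneg ha hb)

theorem div_one_sub_halleyFactor (a b c : ℝ) :
    a / b / (1 - halleyFactor a b c) = halleyCorrection a b c := by
  rw [halleyCorrection, one_div_mul_eq_div]

theorem halleyCorrection_mul_one_sub (hL : halleyFactor a b c < 1) :
    halleyCorrection a b c * (1 - halleyFactor a b c) = a / b := by
  rw [← div_one_sub_halleyFactor, div_mul_cancel₀ _ (sub_pos.2 hL).ne']

theorem sub_mul_halleyCorrection_add (hb : b ≠ 0) (hL : halleyFactor a b c < 1) :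
    a - b * halleyCorrection a b c + c * (a / b) * halleyCorrection a b c / 2 = 0 := by
  have hfactor : b * halleyFactor a b c = c * (a / b) / 2 := by
    rw [halleyFactor]; field_simp
  have hdiv : a = b * (a / b) := (mul_div_cancel₀ a hb).symm
  linear_combination
    hdiv - halleyCorrection a b c * hfactor - b * halleyCorrection_mul_one_sub hL

theorem halleyCorrection_residual (hb : b ≠ 0) (hL : halleyFactor a b c < 1) :
    a - b * halleyCorrection a b c + c * halleyCorrection a b c ^ 2 / 2 =
      c * (halleyFactor a b c * halleyCorrection a b c) * halleyCorrection a b c / 2 := by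
  linear_combination sub_mul_halleyCorrection_add hb hL +
    c * halleyCorrection a b c / 2 * halleyCorrection_mul_one_sub hL

theorem le_mul_halleyCorrection (ha : 0 ≤ a) (hb : 0 < b) (hc : 0 ≤ c)
    (hL : halleyFactor a b c < 1) : a ≤ b * halleyCorrection a b c := by
  have hcorr := halleyCorrection_nonneg ha hb.le hL
  have hnonneg : 0 ≤ c * (a / b) * halleyCorrection a b c / 2 := by positivity
  linarith [sub_mul_halleyCorrection_add hb.ne' hL]

theorem div_lt_of_quadratic_nonpos (hb : 0 < b) (hc : 0 < c) (hd : 0 < d)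
    (hq : a - b * d + c * d ^ 2 / 2 ≤ 0) : a / b < d := by
  have : 0 < c * d ^ 2 := by positivity
  rw [div_lt_iff₀ hb]
  linarith

theorem halleyFactor_lt_one (ha : 0 < a) (hb : 0 < b) (hc : 0 < c) (hd : 0 < d)
    (hq : a - b * d + c * d ^ 2 / 2 ≤ 0) : halleyFactor a b c < 1 := by
  have hn : a / b < d := div_lt_of_quadratic_nonpos hb hc hd hq
  have hcd : c * d < 2 * b := by nlinarith
  calc halleyFactor a b c = c * (a / b) / (2 * b) := by rw [halleyFactor]; field_simp
    _ < c * d / (2 * b) := by gcongr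
    _ < 1 := (div_lt_one (by positivity)).2 hcd

theorem halleyCorrection_lt (ha : 0 < a) (hb : 0 < b) (hc : 0 < c) (hd : 0 < d)
    (hq : a - b * d + c * d ^ 2 / 2 ≤ 0) : halleyCorrection a b c < d := by
  have hn : a / b < d := div_lt_of_quadratic_nonpos hb hc hd hq
  have hroot := sub_mul_halleyCorrection_add hb.ne' (halleyFactor_lt_one ha hb hc hd hq)
  -- The correction is the root of a decreasing affine function which is negative at `d`.
  have hd_neg : a - (b - c * (a / b) / 2) * d < 0 := by nlinarith [mul_pos hc hd]
  have hslope : 0 < b - c * (a / b) / 2 := by nlinarith [mul_pos hc hd]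
  exact lt_of_mul_lt_mul_left (a := b - c * (a / b) / 2) (by linarith) hslope.le

end ScalarStep

section OperatorStep

variable {X Y : Type*} [NormedAddCommGroup X] [NormedSpace ℝ X]
  [NormedAddCommGroup Y] [NormedSpace ℝ Y]

/-- Halley's operator `L_F(x) = ½ F'(x)⁻¹ F''(x) F'(x)⁻¹ F(x)`, in terms of `e = F'(x)`,
`A = F''(x)` and `v = F(x)`. -/
noncomputable def halleyOperator (e : X ≃L[ℝ] Y) (A : X →L[ℝ] X →L[ℝ] Y) (v : Y) : X →L[ℝ] X :=
  (2⁻¹ : ℝ) • (e.symm : Y →L[ℝ] X).comp (A (e.symm v))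

/-- One step `x ↦ y` of Halley's method for `F`. The invertibility of `F'(x)` and of `I - L_F(x)`
is witnessed by the equivalences `e` and `m`. -/
def IsHalleyStep (F : X → Y) (F' : X → X →L[ℝ] Y) (F'' : X → X →L[ℝ] X →L[ℝ] Y)
    (x y : X) (e : X ≃L[ℝ] Y) (m : X ≃L[ℝ] X) : Prop :=
  (e : X →L[ℝ] Y) = F' x ∧
  (m : X →L[ℝ] X) = ContinuousLinearMap.id ℝ X - halleyOperator e (F'' x) (F x) ∧
  y = x - m.symm (e.symm (F x))

theorem norm_halleyOperator_le {e : X ≃L[ℝ] Y} {A : X →L[ℝ] X →L[ℝ] Y} {v : Y} {a b c : ℝ}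
    (hb : 0 < b) (hsymm : ∀ w, ‖e.symm w‖ ≤ ‖w‖ / b) (hA : ‖A‖ ≤ c) (hv : ‖v‖ ≤ a) :
    ‖halleyOperator e A v‖ ≤ halleyFactor a b c := by
  have ha : 0 ≤ a := (norm_nonneg v).trans hv
  have hc : 0 ≤ c := (norm_nonneg A).trans hA
  have hnewton : ‖e.symm v‖ ≤ a / b := (hsymm v).trans (by gcongr)
  refine ContinuousLinearMap.opNorm_le_bound _ (by rw [halleyFactor]; positivity) fun w => ?_
  calc ‖halleyOperator e A v w‖ = 2⁻¹ * ‖e.symm (A (e.symm v) w)‖ := by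
        simp [halleyOperator, norm_smul]
    _ ≤ 2⁻¹ * (c * (a / b) * ‖w‖ / b) := by
        gcongr
        exact (hsymm _).trans (by gcongr; exact A.le_of_opNorm₂_le_of_le hA hnewton le_rfl)
    _ = halleyFactor a b c * ‖w‖ := by rw [halleyFactor]; field_simp

namespace IsHalleyStep

variable {F : X → Y} {F' : X → X →L[ℝ] Y} {F'' : X → X →L[ℝ] X →L[ℝ] Y} {x y : X}
  {e : X ≃L[ℝ] Y} {m : X ≃L[ℝ] X}

theorem sub_add_symm_apply (h : IsHalleyStep F F' F'' x y e m) :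
    y - x + e.symm (F x) = halleyOperator e (F'' x) (F x) (y - x) := by
  obtain ⟨-, hm, rfl⟩ := h
  set d := m.symm (e.symm (F x)) with hd
  have hmd : e.symm (F x) = d - halleyOperator e (F'' x) (F x) d := by
    simpa [hd] using DFunLike.congr_fun hm d
  rw [sub_sub_cancel_left, map_neg, neg_add_eq_sub, ← neg_sub, neg_inj, sub_eq_iff_eq_add,
    ← sub_eq_iff_eq_add', hmd]

theorem quadratic_residual (h : IsHalleyStep F F' F'' x y e m) :
    F x + F' x (y - x) + (2⁻¹ : ℝ) • F'' x (y - x) (y - x) =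
      (2⁻¹ : ℝ) • F'' x (halleyOperator e (F'' x) (F x) (y - x)) (y - x) := by
  have hlinear : F x + F' x (y - x) = (2⁻¹ : ℝ) • F'' x (e.symm (F x)) (y - x) := calc
    F x + F' x (y - x) = e (y - x + e.symm (F x)) := by
      rw [← h.1]; simp [add_comm]
    _ = (2⁻¹ : ℝ) • F'' x (e.symm (F x)) (y - x) := by
      rw [h.sub_add_symm_apply]; simp [halleyOperator]
  rw [hlinear, ← h.sub_add_symm_apply, map_add, add_apply, smul_add, add_comm]

theorem of_comp_symm {e₀ : X ≃L[ℝ] Y} {u : X ≃L[ℝ] X}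
    (h : IsHalleyStep (fun x => e₀.symm (F x)) (fun x => (e₀.symm : Y →L[ℝ] X).comp (F' x))
      (fun x => (ContinuousLinearMap.compL ℝ X Y X (e₀.symm : Y →L[ℝ] X)).comp (F'' x)) x y u m) :
    IsHalleyStep F F' F'' x y (u.trans e₀) m := by
  obtain ⟨hu, hm, hy⟩ := h
  refine ⟨?_, hm, hy⟩
  ext v
  simpa using congrArg e₀ (DFunLike.congr_fun hu v)

end IsHalleyStep

theorem exists_isHalleyStep [CompleteSpace X] {F : X → Y} {F' : X → X →L[ℝ] Y}
    {F'' : X → X →L[ℝ] X →L[ℝ] Y} {x : X} {e : X ≃L[ℝ] Y} {a b c : ℝ}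
    (he : (e : X →L[ℝ] Y) = F' x) (hb : 0 < b) (hsymm : ∀ w, ‖e.symm w‖ ≤ ‖w‖ / b)
    (hF : ‖F x‖ ≤ a) (hF'' : ‖F'' x‖ ≤ c) (hL : halleyFactor a b c < 1) :
    ∃ y m, IsHalleyStep F F' F'' x y e m ∧ ‖y - x‖ ≤ halleyCorrection a b c ∧
      ‖F x + F' x (y - x) + (2⁻¹ : ℝ) • F'' x (y - x) (y - x)‖ ≤
        a - b * halleyCorrection a b c + c * halleyCorrection a b c ^ 2 / 2 := by
  set s := halleyCorrection a b c with hs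
  have hop : ‖halleyOperator e (F'' x) (F x)‖ ≤ halleyFactor a b c :=
    norm_halleyOperator_le hb hsymm hF'' hF
  obtain ⟨m, hm, hm_symm⟩ := exists_continuousLinearEquiv_eq_id_sub hop hL
  let y := x - m.symm (e.symm (F x))
  have hstep : IsHalleyStep F F' F'' x y e m := ⟨he, hm, rfl⟩
  have hnewton : ‖e.symm (F x)‖ ≤ a / b := (hsymm _).trans (by gcongr)
  have hy : ‖y - x‖ ≤ s := calc
    ‖y - x‖ = ‖m.symm (e.symm (F x))‖ := by simp [y]
    _ ≤ a / b / (1 - halleyFactor a b c) := (hm_symm _).trans (by gcongr)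
    _ = s := div_one_sub_halleyFactor a b c
  have hopy : ‖halleyOperator e (F'' x) (F x) (y - x)‖ ≤ halleyFactor a b c * s :=
    ContinuousLinearMap.le_of_opNorm_le_of_le _ hop hy
  refine ⟨y, m, hstep, hy, ?_⟩
  calc ‖F x + F' x (y - x) + (2⁻¹ : ℝ) • F'' x (y - x) (y - x)‖
      = 2⁻¹ * ‖F'' x (halleyOperator e (F'' x) (F x) (y - x)) (y - x)‖ := by
        rw [hstep.quadratic_residual, norm_smul, Real.norm_of_nonneg (by norm_num)]
    _ ≤ 2⁻¹ * (c * (halleyFactor a b c * s) * s) := by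
        gcongr
        exact (F'' x).le_of_opNorm₂_le_of_le hF'' hopy hy
    _ = a - b * s + c * s ^ 2 / 2 := by
        rw [hs, halleyCorrection_residual hb.ne' hL]; ring

end OperatorStep

/-- Assumptions (A1)–(A3) on a scalar majorant `h` with derivatives `h'` and `h''`: `r` is the zero
of `h` towards which the scalar Halley iteration from `0` increases. With `h'` increasing, the sign
condition `h' r ≤ 0` says that it is the smallest zero; double zeros are allowed. -/
structure IsHalleyMajorant (R r : ℝ) (h h' h'' : ℝ → ℝ) : Prop where
  hasDerivWithinAt : ∀ s ∈ Ico 0 R, HasDerivWithinAt h (h' s) (Ico 0 R) s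
  hasDerivWithinAt_deriv : ∀ s ∈ Ico 0 R, HasDerivWithinAt h' (h'' s) (Ico 0 R) s
  snd_deriv_zero_pos : 0 < h'' 0
  deriv_zero : h' 0 = -1
  convexOn : ConvexOn ℝ (Ico 0 R) h''
  monotoneOn : MonotoneOn h'' (Ico 0 R)
  mem_Ioo : r ∈ Ioo 0 R
  apply_eq_zero : h r = 0
  deriv_nonpos : h' r ≤ 0

namespace IsHalleyMajorant

variable {R r s : ℝ} {h h' h'' : ℝ → ℝ}

theorem mem_Ico (hh : IsHalleyMajorant R r h h' h'') (hs : s ∈ Ico 0 r) : s ∈ Ico 0 R :=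
  ⟨hs.1, hs.2.trans hh.mem_Ioo.2⟩

theorem snd_deriv_pos (hh : IsHalleyMajorant R r h h' h'') (hs : s ∈ Ico 0 R) : 0 < h'' s :=
  hh.snd_deriv_zero_pos.trans_le (hh.monotoneOn ⟨le_rfl, hs.1.trans_lt hs.2⟩ hs hs.1)

theorem strictMonoOn_deriv (hh : IsHalleyMajorant R r h h' h'') : StrictMonoOn h' (Ico 0 R) := by
  refine strictMonoOn_of_deriv_pos (convex_Ico 0 R)
    (fun s hs => (hh.hasDerivWithinAt_deriv s hs).continuousWithinAt) fun s hs => ?_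
  have hs' := interior_subset hs
  rw [((hh.hasDerivWithinAt_deriv s hs').hasDerivAt (mem_interior_iff_mem_nhds.1 hs)).deriv]
  exact hh.snd_deriv_pos hs'

theorem deriv_neg (hh : IsHalleyMajorant R r h h' h'') (hs : s ∈ Ico 0 r) : h' s < 0 :=
  (hh.strictMonoOn_deriv (hh.mem_Ico hs) (Ioo_subset_Ico_self hh.mem_Ioo) hs.2).trans_le
    hh.deriv_nonpos

theorem neg_one_le_deriv (hh : IsHalleyMajorant R r h h' h'') (hs : s ∈ Ico 0 R) : -1 ≤ h' s :=
  hh.deriv_zero.symm.trans_le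
    (hh.strictMonoOn_deriv.monotoneOn ⟨le_rfl, hs.1.trans_lt hs.2⟩ hs hs.1)

theorem pos (hh : IsHalleyMajorant R r h h' h'') (hs : s ∈ Ico 0 r) : 0 < h s := by
  have hsub : Icc 0 r ⊆ Ico 0 R := Icc_subset_Ico_right hh.mem_Ioo.2
  have hanti : StrictAntiOn h (Icc 0 r) := by
    refine strictAntiOn_of_deriv_neg (convex_Icc 0 r)
      (fun u hu => (hh.hasDerivWithinAt u (hsub hu)).continuousWithinAt.mono hsub) fun u hu => ?_
    have hnhds : Ico 0 R ∈ nhds u :=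
      Filter.mem_of_superset (mem_interior_iff_mem_nhds.1 hu) hsub
    rw [((hh.hasDerivWithinAt u (mem_of_mem_nhds hnhds)).hasDerivAt hnhds).deriv]
    rw [interior_Icc] at hu
    exact hh.deriv_neg (Ioo_subset_Ico_self hu)
  exact hh.apply_eq_zero.symm.trans_lt
    (hanti (Ico_subset_Icc_self hs) ⟨hh.mem_Ioo.1.le, le_rfl⟩ hs.2)

theorem quadratic_nonpos (hh : IsHalleyMajorant R r h h' h'') (hs : s ∈ Ico 0 r) :
    h s - -h' s * (r - s) + h'' s * (r - s) ^ 2 / 2 ≤ 0 := by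
  have hsub : Icc s r ⊆ Ico 0 R := fun u hu => ⟨hs.1.trans hu.1, hu.2.trans_lt hh.mem_Ioo.2⟩
  have hmem : s ∈ Icc s r := ⟨le_rfl, hs.2.le⟩
  have htaylor := norm_taylor_two_remainder_le (E := ℝ) (f := 0) (f' := 0) (f'' := 0)
    (fun _ _ => hasDerivWithinAt_const ..) (fun _ _ => hasDerivWithinAt_const ..)
    (fun u hu => (hh.hasDerivWithinAt u (hsub hu)).mono hsub)
    (fun u hu => (hh.hasDerivWithinAt_deriv u (hsub hu)).mono hsub)
    (fun u hu => by simpa using hh.monotoneOn (hsub hmem) (hsub hu) hu.1)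
    (right_mem_Icc.2 hs.2.le)
  simp only [Pi.zero_apply, smul_zero, sub_zero, norm_zero, hh.apply_eq_zero] at htaylor
  linarith

theorem halleyFactor_lt_one (hh : IsHalleyMajorant R r h h' h'') (hs : s ∈ Ico 0 r) :
    halleyFactor (h s) (-h' s) (h'' s) < 1 :=
  _root_.halleyFactor_lt_one (hh.pos hs) (neg_pos.2 (hh.deriv_neg hs))
    (hh.snd_deriv_pos (hh.mem_Ico hs)) (sub_pos.2 hs.2) (hh.quadratic_nonpos hs)

theorem add_halleyCorrection_mem_Ico (hh : IsHalleyMajorant R r h h' h'') (hs : s ∈ Ico 0 r) :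
    s + halleyCorrection (h s) (-h' s) (h'' s) ∈ Ico 0 r := by
  have hb : 0 < -h' s := neg_pos.2 (hh.deriv_neg hs)
  have hlt := halleyCorrection_lt (hh.pos hs) hb (hh.snd_deriv_pos (hh.mem_Ico hs))
    (sub_pos.2 hs.2) (hh.quadratic_nonpos hs)
  have hnonneg := halleyCorrection_nonneg (hh.pos hs).le hb.le (hh.halleyFactor_lt_one hs)
  exact ⟨add_nonneg hs.1 hnonneg, by linarith⟩

theorem le_halleyCorrection (hh : IsHalleyMajorant R r h h' h'') (hs : s ∈ Ico 0 r) :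
    h s ≤ halleyCorrection (h s) (-h' s) (h'' s) := by
  have hb : 0 < -h' s := neg_pos.2 (hh.deriv_neg hs)
  have hL := hh.halleyFactor_lt_one hs
  calc h s ≤ -h' s * halleyCorrection (h s) (-h' s) (h'' s) :=
        le_mul_halleyCorrection (hh.pos hs).le hb (hh.snd_deriv_pos (hh.mem_Ico hs)).le hL
    _ ≤ halleyCorrection (h s) (-h' s) (h'' s) :=
        mul_le_of_le_one_left (halleyCorrection_nonneg (hh.pos hs).le hb.le hL)
          (by linarith [hh.neg_one_le_deriv (hh.mem_Ico hs)])

section Iteration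

variable {t : ℕ → ℝ}

theorem mem_Ico_of_rec (hh : IsHalleyMajorant R r h h' h'') (ht0 : t 0 = 0)
    (hrec : ∀ k, t (k + 1) = t k + halleyCorrection (h (t k)) (-h' (t k)) (h'' (t k))) (k : ℕ) :
    t k ∈ Ico 0 r := by
  induction k with
  | zero => rw [ht0, left_mem_Ico]; exact hh.mem_Ioo.1
  | succ k ih => exact hrec k ▸ hh.add_halleyCorrection_mem_Ico ih

theorem exists_tendsto_le_of_rec (hh : IsHalleyMajorant R r h h' h'') (ht : ∀ k, t k ∈ Ico 0 r)
    (hrec : ∀ k, t (k + 1) = t k + halleyCorrection (h (t k)) (-h' (t k)) (h'' (t k))) :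
    ∃ c ≤ r, Filter.Tendsto t Filter.atTop (nhds c) := by
  have hmono : Monotone t := monotone_nat_of_le_succ fun k => by
    rw [hrec, le_add_iff_nonneg_right]
    exact (hh.pos (ht k)).le.trans (hh.le_halleyCorrection (ht k))
  exact ⟨⨆ k, t k, ciSup_le fun k => (ht k).2.le,
    tendsto_atTop_ciSup hmono ⟨r, forall_mem_range.2 fun k => (ht k).2.le⟩⟩

theorem tendsto_zero_of_rec (hh : IsHalleyMajorant R r h h' h'') (ht : ∀ k, t k ∈ Ico 0 r)
    (hrec : ∀ k, t (k + 1) = t k + halleyCorrection (h (t k)) (-h' (t k)) (h'' (t k))) :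
    Filter.Tendsto (fun k => h (t k)) Filter.atTop (nhds 0) := by
  obtain ⟨c, -, hc⟩ := hh.exists_tendsto_le_of_rec ht hrec
  have hstep : Filter.Tendsto (fun k => t (k + 1) - t k) Filter.atTop (nhds 0) := by
    simpa using (hc.comp (Filter.tendsto_add_atTop_nat 1)).sub hc
  refine squeeze_zero (fun k => (hh.pos (ht k)).le) (fun k => ?_) hstep
  rw [hrec, add_sub_cancel_left]
  exact hh.le_halleyCorrection (ht k)

end Iteration

end IsHalleyMajorant

/-- `h`, with second derivative `h''`, is a majorizing function at `x₀` for a map `G` with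
derivatives `G'` and `G''`. The map is normalized by `G' x₀ = I`: for a general `F` one takes
`G = F'(x₀)⁻¹ ∘ F`. -/
structure IsMajorizedBy {X : Type*} [NormedAddCommGroup X] [NormedSpace ℝ X] (G : X → X)
    (G' : X → X →L[ℝ] X) (G'' : X → X →L[ℝ] X →L[ℝ] X) (x₀ : X) (R : ℝ) (h h'' : ℝ → ℝ) :
    Prop where
  hasFDerivAt : ∀ x ∈ ball x₀ R, HasFDerivAt G (G' x) x
  hasFDerivAt_fderiv : ∀ x ∈ ball x₀ R, HasFDerivAt G' (G'' x) x
  fderiv_eq_id : G' x₀ = ContinuousLinearMap.id ℝ X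
  norm_apply_le : ‖G x₀‖ ≤ h 0
  norm_snd_fderiv_le : ‖G'' x₀‖ ≤ h'' 0
  norm_snd_fderiv_sub_le : ∀ x ∈ ball x₀ R, ∀ y ∈ ball x₀ R, ‖y - x‖ + ‖x - x₀‖ < R →
    ‖G'' y - G'' x‖ ≤ h'' (‖y - x‖ + ‖x - x₀‖) - h'' ‖x - x₀‖

theorem hasDerivWithinAt_comp_lineMap {f f' : ℝ → ℝ} {S : Set ℝ} (hS : Convex ℝ S)
    (hf : ∀ u ∈ S, HasDerivWithinAt f (f' u) S u) {a b τ : ℝ} (ha : a ∈ S) (hb : b ∈ S)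
    (hτ : τ ∈ Icc (0 : ℝ) 1) :
    HasDerivWithinAt (fun τ => f (AffineMap.lineMap a b τ))
      (f' (AffineMap.lineMap a b τ) * (b - a)) (Icc 0 1) τ :=
  (hf _ (hS.lineMap_mem ha hb hτ)).comp τ AffineMap.hasDerivWithinAt_lineMap
    fun _ hσ => hS.lineMap_mem ha hb hσ

theorem norm_lineMap_sub_left_le {X : Type*} [NormedAddCommGroup X] [NormedSpace ℝ X] {x y : X}
    {a b τ : ℝ} (hxy : ‖y - x‖ ≤ b - a) (hτ : 0 ≤ τ) :
    ‖AffineMap.lineMap x y τ - x‖ ≤ AffineMap.lineMap a b τ - a := by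
  simpa [AffineMap.lineMap_apply_module', norm_smul, abs_of_nonneg hτ] using
    mul_le_mul_of_nonneg_left hxy hτ

namespace IsMajorizedBy

variable {X : Type*} [NormedAddCommGroup X] [NormedSpace ℝ X] {G : X → X} {G' : X → X →L[ℝ] X}
  {G'' : X → X →L[ℝ] X →L[ℝ] X} {x₀ x y : X} {R r s t : ℝ} {h h' h'' : ℝ → ℝ}

theorem norm_snd_fderiv_sub_le_of_le (hG : IsMajorizedBy G G' G'' x₀ R h h'')
    (hconv : ConvexOn ℝ (Ico 0 R) h'') (hmono : MonotoneOn h'' (Ico 0 R))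
    (hx : ‖x - x₀‖ ≤ s) (hxy : ‖y - x‖ ≤ t - s) (ht : t < R) :
    ‖G'' y - G'' x‖ ≤ h'' t - h'' s := by
  have hx0 := norm_nonneg (x - x₀)
  have hxy0 := norm_nonneg (y - x)
  have hy : ‖y - x₀‖ ≤ ‖y - x‖ + ‖x - x₀‖ := norm_sub_le_norm_sub_add_norm_sub ..
  calc ‖G'' y - G'' x‖ ≤ h'' (‖x - x₀‖ + ‖y - x‖) - h'' ‖x - x₀‖ := by
        rw [add_comm]
        exact hG.norm_snd_fderiv_sub_le x (mem_ball_iff_norm.2 (by linarith)) y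
          (mem_ball_iff_norm.2 (by linarith)) (by linarith)
    _ ≤ h'' (s + ‖y - x‖) - h'' s :=
        convexOn_add_sub_le_add_sub hconv ⟨hx0, by linarith⟩ ⟨by linarith, by linarith⟩ hx hxy0
    _ ≤ h'' t - h'' s := by
        gcongr
        exact hmono ⟨by linarith, by linarith⟩ ⟨by linarith, ht⟩ (by linarith)

theorem norm_snd_fderiv_le_of_le (hG : IsMajorizedBy G G' G'' x₀ R h h'')
    (hconv : ConvexOn ℝ (Ico 0 R) h'') (hmono : MonotoneOn h'' (Ico 0 R))
    (hx : ‖x - x₀‖ ≤ s) (hs : s < R) : ‖G'' x‖ ≤ h'' s := by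
  have hdiff : ‖G'' x - G'' x₀‖ ≤ h'' s - h'' 0 :=
    hG.norm_snd_fderiv_sub_le_of_le hconv hmono (by simp) (by simpa using hx) hs
  linarith [norm_le_norm_add_norm_sub' (G'' x) (G'' x₀), hG.norm_snd_fderiv_le]

theorem norm_id_sub_fderiv_le (hG : IsMajorizedBy G G' G'' x₀ R h h'')
    (hh : IsHalleyMajorant R r h h' h'') (hx : ‖x - x₀‖ ≤ s) (hs : s < R) :
    ‖ContinuousLinearMap.id ℝ X - G' x‖ ≤ 1 - -h' s := by
  have hs0 : 0 ≤ s := (norm_nonneg _).trans hx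
  have hline {τ : ℝ} (hτ : τ ∈ Icc (0 : ℝ) 1) :
      ‖AffineMap.lineMap x₀ x τ - x₀‖ ≤ AffineMap.lineMap 0 s τ := by
    simpa using norm_lineMap_sub_left_le (a := 0) (by simpa using hx) hτ.1
  have hline_lt {τ : ℝ} (hτ : τ ∈ Icc (0 : ℝ) 1) : AffineMap.lineMap 0 s τ < R :=
    ((convex_Ico 0 R).lineMap_mem ⟨le_rfl, hs0.trans_lt hs⟩ ⟨hs0, hs⟩ hτ).2
  have hmvt := norm_sub_le_sub_of_norm_deriv_le
    (fun τ hτ => (hG.hasFDerivAt_fderiv _ (mem_ball_iff_norm.2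
      ((hline hτ).trans_lt (hline_lt hτ)))).comp_hasDerivWithinAt τ
        AffineMap.hasDerivWithinAt_lineMap)
    (fun τ hτ => hasDerivWithinAt_comp_lineMap (convex_Ico 0 R) hh.hasDerivWithinAt_deriv
      ⟨le_rfl, hs0.trans_lt hs⟩ ⟨hs0, hs⟩ hτ)
    (fun τ hτ => ContinuousLinearMap.le_of_opNorm_le_of_le _
      (hG.norm_snd_fderiv_le_of_le hh.convexOn hh.monotoneOn (hline hτ) (hline_lt hτ))
      (by simpa using hx)) (right_mem_Icc.2 zero_le_one)
  simp only [Function.comp_apply, AffineMap.lineMap_apply_one, AffineMap.lineMap_apply_zero,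
    hG.fderiv_eq_id, hh.deriv_zero] at hmvt
  rw [norm_sub_rev]
  linarith

theorem norm_taylor_remainder_le (hG : IsMajorizedBy G G' G'' x₀ R h h'')
    (hh : IsHalleyMajorant R r h h' h'') (hx : ‖x - x₀‖ ≤ s) (hxy : ‖y - x‖ ≤ t - s)
    (ht : t < R) :
    ‖G y - G x - G' x (y - x) - (2⁻¹ : ℝ) • G'' x (y - x) (y - x)‖ ≤
      h t - h s - h' s * (t - s) - h'' s * (t - s) ^ 2 / 2 := by
  have hs0 : 0 ≤ s := (norm_nonneg _).trans hx
  have hst : s ≤ t := sub_nonneg.1 ((norm_nonneg _).trans hxy)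
  have hs : s ∈ Ico 0 R := ⟨hs0, hst.trans_lt ht⟩
  have ht' : t ∈ Ico 0 R := ⟨hs0.trans hst, ht⟩
  have hline {τ : ℝ} (hτ : τ ∈ Icc (0 : ℝ) 1) :
      ‖AffineMap.lineMap x y τ - x‖ ≤ AffineMap.lineMap s t τ - s :=
    norm_lineMap_sub_left_le hxy hτ.1
  have hline_lt {τ : ℝ} (hτ : τ ∈ Icc (0 : ℝ) 1) : AffineMap.lineMap s t τ < R :=
    ((convex_Ico 0 R).lineMap_mem hs ht' hτ).2
  have hball {τ : ℝ} (hτ : τ ∈ Icc (0 : ℝ) 1) : AffineMap.lineMap x y τ ∈ ball x₀ R := by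
    rw [mem_ball_iff_norm, ← sub_add_sub_cancel _ x]
    linarith [norm_add_le (AffineMap.lineMap x y τ - x) (x - x₀), hline hτ, hline_lt hτ]
  have htaylor := norm_taylor_two_remainder_le
    (f' := fun τ => G' (AffineMap.lineMap x y τ) (y - x))
    (f'' := fun τ => G'' (AffineMap.lineMap x y τ) (y - x) (y - x))
    (B' := fun τ => h' (AffineMap.lineMap s t τ) * (t - s))
    (B'' := fun τ => h'' (AffineMap.lineMap s t τ) * (t - s) * (t - s))
    (fun τ hτ => (hG.hasFDerivAt _ (hball hτ)).comp_hasDerivWithinAt τ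
      AffineMap.hasDerivWithinAt_lineMap)
    (fun τ hτ => by
      simpa using ((hG.hasFDerivAt_fderiv _ (hball hτ)).comp_hasDerivWithinAt τ
        AffineMap.hasDerivWithinAt_lineMap).clm_apply (hasDerivWithinAt_const τ (Icc 0 1) (y - x)))
    (fun τ hτ => hasDerivWithinAt_comp_lineMap (convex_Ico 0 R) hh.hasDerivWithinAt hs ht' hτ)
    (fun τ hτ => (hasDerivWithinAt_comp_lineMap (convex_Ico 0 R) hh.hasDerivWithinAt_deriv
      hs ht' hτ).mul_const (t - s))
    (fun τ hτ => by
      simpa [sub_mul] using ContinuousLinearMap.le_of_opNorm₂_le_of_le _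
        (hG.norm_snd_fderiv_sub_le_of_le hh.convexOn hh.monotoneOn hx (hline hτ) (hline_lt hτ))
        hxy hxy) (right_mem_Icc.2 zero_le_one)
  simp only [Function.comp_apply, AffineMap.lineMap_apply_one, AffineMap.lineMap_apply_zero,
    sub_zero, one_smul, one_pow, one_div, one_mul] at htaylor
  exact htaylor.trans_eq (by ring)

theorem exists_isHalleyStep [CompleteSpace X] (hG : IsMajorizedBy G G' G'' x₀ R h h'')
    (hh : IsHalleyMajorant R r h h' h'') (hs : s ∈ Ico 0 r)
    (ht : t = s + halleyCorrection (h s) (-h' s) (h'' s)) (hx : ‖x - x₀‖ ≤ s) (hGx : ‖G x‖ ≤ h s) :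
    ∃ y e m, IsHalleyStep G G' G'' x y e m ∧ ‖y - x‖ ≤ t - s ∧ ‖G y‖ ≤ h t := by
  have hsR : s < R := (hh.mem_Ico hs).2
  have htR : t < R := ht ▸ (hh.mem_Ico (hh.add_halleyCorrection_mem_Ico hs)).2
  have hb : 0 < -h' s := neg_pos.2 (hh.deriv_neg hs)
  obtain ⟨e, he, he_symm⟩ := exists_continuousLinearEquiv_eq_id_sub
    (hG.norm_id_sub_fderiv_le hh hx hsR) (sub_lt_self 1 hb)
  rw [sub_sub_cancel] at he
  simp only [sub_sub_cancel] at he_symm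
  obtain ⟨y, m, hstep, hy, hres⟩ := _root_.exists_isHalleyStep he hb he_symm hGx
    (hG.norm_snd_fderiv_le_of_le hh.convexOn hh.monotoneOn hx hsR) (hh.halleyFactor_lt_one hs)
  rw [← sub_eq_of_eq_add' ht] at hy hres
  refine ⟨y, e, m, hstep, hy, ?_⟩
  have hrem := hG.norm_taylor_remainder_le hh hx hy htR
  calc ‖G y‖ = ‖(G y - G x - G' x (y - x) - (2⁻¹ : ℝ) • G'' x (y - x) (y - x)) +
        (G x + G' x (y - x) + (2⁻¹ : ℝ) • G'' x (y - x) (y - x))‖ := by congr 1; abel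
    _ ≤ h t := by linarith [norm_add_le_of_le hrem hres]

theorem exists_halley_seq [CompleteSpace X] (hG : IsMajorizedBy G G' G'' x₀ R h h'')
    (hh : IsHalleyMajorant R r h h' h'') {t : ℕ → ℝ} (ht0 : t 0 = 0)
    (ht : ∀ k, t k ∈ Ico 0 r)
    (hrec : ∀ k, t (k + 1) = t k + halleyCorrection (h (t k)) (-h' (t k)) (h'' (t k))) :
    ∃ (x : ℕ → X) (e m : ℕ → X ≃L[ℝ] X), x 0 = x₀ ∧ ∀ k,
      IsHalleyStep G G' G'' (x k) (x (k + 1)) (e k) (m k) ∧ ‖x k - x₀‖ ≤ t k ∧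
      ‖G (x k)‖ ≤ h (t k) ∧ dist (x k) (x (k + 1)) ≤ t (k + 1) - t k := by
  obtain ⟨x, hx0, hx⟩ := exists_seq_of_forall_exists_next
    (P := fun k x => ‖x - x₀‖ ≤ t k ∧ ‖G x‖ ≤ h (t k))
    (r := fun k x y => (∃ e m, IsHalleyStep G G' G'' x y e m) ∧ ‖y - x‖ ≤ t (k + 1) - t k)
    (a := x₀) (by simpa [ht0] using hG.norm_apply_le) fun k x hx => by
      obtain ⟨y, e, m, hstep, hy, hGy⟩ := hG.exists_isHalleyStep hh (ht k) (hrec k) hx.1 hx.2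
      have := norm_sub_le_norm_sub_add_norm_sub y x x₀
      exact ⟨y, ⟨⟨e, m, hstep⟩, hy⟩, by linarith [hx.1], hGy⟩
  choose e m hstep using fun k => (hx k).2.1
  exact ⟨x, e, m, hx0, fun k => ⟨hstep k, (hx k).1.1, (hx k).1.2,
    (dist_eq_norm' ..).trans_le (hx k).2.2⟩⟩

theorem exists_halley_seq_tendsto [CompleteSpace X] (hG : IsMajorizedBy G G' G'' x₀ R h h'')
    (hh : IsHalleyMajorant R r h h' h'') {t : ℕ → ℝ} (ht0 : t 0 = 0)
    (hrec : ∀ k, t (k + 1) = t k + halleyCorrection (h (t k)) (-h' (t k)) (h'' (t k))) :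
    ∃ (x : ℕ → X) (e m : ℕ → X ≃L[ℝ] X), x 0 = x₀ ∧
      (∀ k, IsHalleyStep G G' G'' (x k) (x (k + 1)) (e k) (m k)) ∧
      (∀ k, x k ∈ ball x₀ r) ∧ ∃ z ∈ closedBall x₀ r,
        Filter.Tendsto x Filter.atTop (nhds z) ∧ G z = 0 ∧ ∀ k, ‖z - x k‖ ≤ r - t k := by
  have ht := hh.mem_Ico_of_rec ht0 hrec
  obtain ⟨x, e, m, hx0, hx⟩ := hG.exists_halley_seq hh ht0 ht hrec
  obtain ⟨c, hcr, hc⟩ := hh.exists_tendsto_le_of_rec ht hrec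
  obtain ⟨z, hz, hzx⟩ := exists_tendsto_of_dist_le_sub (fun k => (hx k).2.2.2) hc
  have herror (k : ℕ) : ‖z - x k‖ ≤ r - t k :=
    (dist_eq_norm' ..).symm.trans_le ((hzx k).trans (sub_le_sub_right hcr _))
  have hzr : z ∈ closedBall x₀ r := by
    simpa only [mem_closedBall_iff_norm, hx0, ht0, sub_zero] using herror 0
  have hcont : ContinuousAt G z :=
    (hG.hasFDerivAt z (closedBall_subset_ball hh.mem_Ioo.2 hzr)).continuousAt
  have hGx : Filter.Tendsto (fun k => G (x k)) Filter.atTop (nhds 0) :=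
    squeeze_zero_norm (fun k => (hx k).2.2.1) (hh.tendsto_zero_of_rec ht hrec)
  exact ⟨x, e, m, hx0, fun k => (hx k).1,
    fun k => mem_ball_iff_norm.2 ((hx k).2.1.trans_lt (ht k).2), z, hzr, hz,
    tendsto_nhds_unique (hcont.tendsto.comp hz) hGx, herror⟩

theorem of_comp_symm {Y : Type*} [NormedAddCommGroup Y] [NormedSpace ℝ Y] {F : X → Y}
    {F' : X → X →L[ℝ] Y} {F'' : X → X →L[ℝ] X →L[ℝ] Y}
    (hF : ∀ x ∈ ball x₀ R, HasFDerivAt F (F' x) x)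
    (hF' : ∀ x ∈ ball x₀ R, HasFDerivAt F' (F'' x) x)
    {e₀ : X ≃L[ℝ] Y} (he₀ : (e₀ : X →L[ℝ] Y) = F' x₀) (hFx₀ : ‖e₀.symm (F x₀)‖ ≤ h 0)
    (hF''x₀ : ‖(ContinuousLinearMap.compL ℝ X Y X (e₀.symm : Y →L[ℝ] X)).comp (F'' x₀)‖ ≤ h'' 0)
    (hmaj : ∀ x ∈ ball x₀ R, ∀ y ∈ ball x₀ R, ‖y - x‖ + ‖x - x₀‖ < R →
      ‖(ContinuousLinearMap.compL ℝ X Y X (e₀.symm : Y →L[ℝ] X)).comp (F'' y - F'' x)‖ ≤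
        h'' (‖y - x‖ + ‖x - x₀‖) - h'' ‖x - x₀‖) :
    IsMajorizedBy (fun x => e₀.symm (F x)) (fun x => (e₀.symm : Y →L[ℝ] X).comp (F' x))
      (fun x => (ContinuousLinearMap.compL ℝ X Y X (e₀.symm : Y →L[ℝ] X)).comp (F'' x))
      x₀ R h h'' where
  hasFDerivAt x hx := (e₀.symm : Y →L[ℝ] X).hasFDerivAt.comp x (hF x hx)
  hasFDerivAt_fderiv x hx :=
    (ContinuousLinearMap.compL ℝ X Y X (e₀.symm : Y →L[ℝ] X)).hasFDerivAt.comp x (hF' x hx)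
  fderiv_eq_id := by rw [← he₀]; ext v; simp
  norm_apply_le := hFx₀
  norm_snd_fderiv_le := hF''x₀
  norm_snd_fderiv_sub_le x hx y hy hxy := by
    rw [← ContinuousLinearMap.comp_sub]
    exact hmaj x hx y hy hxy

end IsMajorizedBy

theorem halley_method_semilocal_convergence_general
    {X Y : Type*} [NormedAddCommGroup X] [NormedSpace ℝ X] [CompleteSpace X]
    [NormedAddCommGroup Y] [NormedSpace ℝ Y]
    {F : X → Y} {F' : X → X →L[ℝ] Y} {F'' : X → X →L[ℝ] X →L[ℝ] Y} {x₀ : X} {R r : ℝ}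
    (hF : ∀ x ∈ ball x₀ R, HasFDerivAt F (F' x) x)
    (hF' : ∀ x ∈ ball x₀ R, HasFDerivAt F' (F'' x) x)
    {e₀ : X ≃L[ℝ] Y} (he₀ : (e₀ : X →L[ℝ] Y) = F' x₀)
    {h h' h'' : ℝ → ℝ} (hh : IsHalleyMajorant R r h h' h'') (hFx₀ : ‖e₀.symm (F x₀)‖ ≤ h 0)
    (hF''x₀ : ‖(ContinuousLinearMap.compL ℝ X Y X (e₀.symm : Y →L[ℝ] X)).comp (F'' x₀)‖ ≤ h'' 0)
    (hmaj : ∀ x ∈ ball x₀ R, ∀ y ∈ ball x₀ R, ‖y - x‖ + ‖x - x₀‖ < R →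
      ‖(ContinuousLinearMap.compL ℝ X Y X (e₀.symm : Y →L[ℝ] X)).comp (F'' y - F'' x)‖ ≤
        h'' (‖y - x‖ + ‖x - x₀‖) - h'' ‖x - x₀‖)
    {t : ℕ → ℝ} (ht0 : t 0 = 0)
    (hrec : ∀ k, t (k + 1) = t k - halleyCorrection (h (t k)) (h' (t k)) (h'' (t k))) :
    ∃ (x : ℕ → X) (e : ℕ → X ≃L[ℝ] Y) (m : ℕ → X ≃L[ℝ] X), x 0 = x₀ ∧
      (∀ k, IsHalleyStep F F' F'' (x k) (x (k + 1)) (e k) (m k)) ∧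
      (∀ k, x k ∈ ball x₀ r) ∧ ∃ z ∈ closedBall x₀ r,
        Filter.Tendsto x Filter.atTop (nhds z) ∧ F z = 0 ∧ ∀ k, ‖z - x k‖ ≤ r - t k := by
  have hG := IsMajorizedBy.of_comp_symm hF hF' he₀ hFx₀ hF''x₀ hmaj
  obtain ⟨x, u, m, hx0, hstep, hball, z, hz, hxz, hGz, herror⟩ :=
    hG.exists_halley_seq_tendsto hh ht0 fun k => by rw [hrec, halleyCorrection_neg, sub_eq_add_neg]
  exact ⟨x, fun k => (u k).trans e₀, m, hx0, fun k => (hstep k).of_comp_symm, hball, z, hz, hxz,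
    e₀.symm.map_eq_zero_iff.1 hGz, herror⟩

/-- semilocal convergence of Halley's method: if `h` is a
majorizing function to `F` at `x₀` satisfying (A1)-(A3) with smallest zero
`tstar` of `h` in `(0,R)`, then the Halley sequence
`x_{k+1} = x_k - [I - L_F(x_k)]⁻¹ F'(x_k)⁻¹ F(x_k)` with
`L_F(x) = ½ F'(x)⁻¹F''(x)F'(x)⁻¹F(x)` starting at `x₀` is well defined (the
invertibility of `F'(x_k)` and of `I - L_F(x_k)` being witnessed by continuous
linear equivalences `e k` and `m k`), stays in `B(x₀,t*)`, and converges to a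
zero `xs` of `F` in the closed ball of radius `t*`, with
`‖xs - x_k‖ ≤ t* - t_k` where `(t_k)` is the majorizing sequence. -/
theorem halley_method_semilocal_convergence
    {X Y : Type*} [NormedAddCommGroup X] [NormedSpace ℝ X] [CompleteSpace X]
    [NormedAddCommGroup Y] [NormedSpace ℝ Y] [CompleteSpace Y]
    (D : Set X) (hD : IsOpen D) (hDconv : Convex ℝ D)
    (F : X → Y) (F' : X → X →L[ℝ] Y) (F'' : X → X →L[ℝ] X →L[ℝ] Y)
    (hdF : ∀ x ∈ D, HasFDerivAt F (F' x) x)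
    (hdF' : ∀ x ∈ D, HasFDerivAt F' (F'' x) x)
    (hcF'' : ContinuousOn F'' D)
    (x₀ : X) (hx₀ : x₀ ∈ D)
    (e0 : X ≃L[ℝ] Y) (he0 : (e0 : X →L[ℝ] Y) = F' x₀)
    (R : ℝ) (hR : 0 < R) (hballD : ball x₀ R ⊆ D)
    (h h1 h2 : ℝ → ℝ)
    (hd1 : ∀ s ∈ Ico (0:ℝ) R, HasDerivWithinAt h (h1 s) (Ico 0 R) s)
    (hd2 : ∀ s ∈ Ico (0:ℝ) R, HasDerivWithinAt h1 (h2 s) (Ico 0 R) s)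
    (hc2 : ContinuousOn h2 (Ico 0 R))
    (hA1a : 0 < h 0) (hA1b : 0 < h2 0) (hA1c : h1 0 = -1)
    (hA2a : ConvexOn ℝ (Ico 0 R) h2) (hA2b : StrictMonoOn h2 (Ico 0 R))
    (tstar : ℝ) (htsmem : tstar ∈ Ioo 0 R) (htszero : h tstar = 0)
    (htsmin : ∀ s ∈ Ioo (0:ℝ) R, h s = 0 → tstar ≤ s) (htsder : h1 tstar < 0)
    (hmaj : ∀ x ∈ ball x₀ R, ∀ y ∈ ball x₀ R, ‖y - x‖ + ‖x - x₀‖ < R →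
      ‖(ContinuousLinearMap.compL ℝ X Y X (e0.symm : Y →L[ℝ] X)).comp
          (F'' y - F'' x)‖ ≤ h2 (‖y - x‖ + ‖x - x₀‖) - h2 ‖x - x₀‖)
    (hinit1 : ‖(e0.symm : Y →L[ℝ] X) (F x₀)‖ ≤ h 0)
    (hinit2 : ‖(ContinuousLinearMap.compL ℝ X Y X (e0.symm : Y →L[ℝ] X)).comp
        (F'' x₀)‖ ≤ h2 0)
    (t : ℕ → ℝ) (ht0 : t 0 = 0)
    (hrec : ∀ k, t (k + 1) =
      t k - (1 / (1 - h (t k) * h2 (t k) / (2 * (h1 (t k)) ^ 2))) * (h (t k) / h1 (t k))) :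
    ∃ (x : ℕ → X) (e : ℕ → (X ≃L[ℝ] Y)) (m : ℕ → (X ≃L[ℝ] X)),
      x 0 = x₀ ∧
      (∀ k,
        ((e k : X →L[ℝ] Y) = F' (x k)) ∧
        ((m k : X →L[ℝ] X) = ContinuousLinearMap.id ℝ X -
          (2⁻¹ : ℝ) • (((e k).symm : Y →L[ℝ] X).comp
            ((F'' (x k)) ((e k).symm (F (x k)))))) ∧
        (x (k + 1) = x k - (m k).symm ((e k).symm (F (x k))))) ∧
      (∀ k, x k ∈ ball x₀ tstar) ∧
      ∃ xs ∈ closedBall x₀ tstar,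
        Filter.Tendsto x Filter.atTop (nhds xs) ∧ F xs = 0 ∧
        ∀ k, ‖xs - x k‖ ≤ tstar - t k := by
  exact halley_method_semilocal_convergence_general (fun x hx => hdF x (hballD hx))
    (fun x hx => hdF' x (hballD hx)) he0
    ⟨hd1, hd2, hA1b, hA1c, hA2a, hA2b.monotoneOn, htsmem, htszero, htsder.le⟩
    hinit1 hinit2 hmaj ht0 hrec
end
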